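/- arXiv:1808.02804 — 7 statements merged into one kernel-verified Lean document; each statement's English description precedes it below -/
import Mathlib

section
/- Let T be a hyperbolic homeomorphism of a compact metric space (X,d), with constant ε₀ as in the definition. Then there exist constants κ_s ∈ (0,1] and C > 0 such that whenever four points x, x', y, y' ∈ X satisfy x' ∈ W^u_{ε₀}(x), y' ∈ W^u_{ε₀}(y), y ∈ W^s_{ε₀}(x), and y' ∈ W^s_{ε₀}(x'), one has d(y, y') ≤ C·d(x, x')^{κ_s}. (Proposition 2.5 of the paper: transverse Hölder regularity of stable sets.) -/
/-- Local stable set `W^s_ε(x)`. -/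
def locStable {X : Type*} [MetricSpace X] (T : X ≃ₜ X) (ε : ℝ) (x : X) : Set X :=
  {y | ∀ n : ℕ, dist ((T : X → X)^[n] y) ((T : X → X)^[n] x) ≤ ε}

/-- Local unstable set `W^u_ε(x)`. -/
def locUnstable {X : Type*} [MetricSpace X] (T : X ≃ₜ X) (ε : ℝ) (x : X) : Set X :=
  {y | ∀ n : ℕ, dist ((T.symm : X → X)^[n] y) ((T.symm : X → X)^[n] x) ≤ ε}

/-- Global stable set `W^s(x)`. -/
def gStable {X : Type*} [MetricSpace X] (T : X ≃ₜ X) (x : X) : Set X :=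
  {y | Filter.Tendsto (fun n : ℕ => dist ((T : X → X)^[n] y) ((T : X → X)^[n] x))
    Filter.atTop (nhds 0)}

/-- Global unstable set `W^u(x)`. -/
def gUnstable {X : Type*} [MetricSpace X] (T : X ≃ₜ X) (x : X) : Set X :=
  {y | Filter.Tendsto (fun n : ℕ => dist ((T.symm : X → X)^[n] y) ((T.symm : X → X)^[n] x))
    Filter.atTop (nhds 0)}

/-- `T` is a hyperbolic homeomorphism with constants `ε₀, ε₁`, hyperbolicity exponents
`lu, ls`, bracket map `br` and bracket constant `C₀`. -/
structure HypHomeo {X : Type*} [MetricSpace X] (T : X ≃ₜ X) (ε₀ ε₁ : ℝ)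
    (lu ls : X → ℝ) (br : X → X → X) (C₀ : ℝ) : Prop where
  lipschitz_T : ∃ K : NNReal, LipschitzWith K (T : X → X)
  lipschitz_Tinv : ∃ K : NNReal, LipschitzWith K (T.symm : X → X)
  eps0_pos : 0 < ε₀
  cont_lu : Continuous lu
  cont_ls : Continuous ls
  pos_lu : ∀ x, 0 < lu x
  pos_ls : ∀ x, 0 < ls x
  contract_u : ∀ x x' x'', x' ∈ locUnstable T ε₀ x → x'' ∈ locUnstable T ε₀ x →
    dist (T.symm x') (T.symm x'') ≤ Real.exp (-lu x) * dist x' x''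
  contract_s : ∀ y y' y'', y' ∈ locStable T ε₀ y → y'' ∈ locStable T ε₀ y →
    dist (T y') (T y'') ≤ Real.exp (-ls y) * dist y' y''
  eps1_pos : 0 < ε₁
  eps1_lt : ε₁ < ε₀
  bracket_spec : ∀ x y, dist x y ≤ 2 * ε₁ →
    locUnstable T ε₀ x ∩ locStable T ε₀ y = {br x y}
  bracket_cont : ContinuousOn (fun p : X × X => br p.1 p.2) {p : X × X | dist p.1 p.2 ≤ 2 * ε₁}
  C0_pos : 0 < C₀
  bracket_bound : ∀ x y, dist x y ≤ 2 * ε₁ →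
    max (dist (br x y) x) (dist (br x y) y) ≤ C₀ * dist x y

section helpers

variable {X : Type*} [MetricSpace X]

theorem locStable_map (T : X ≃ₜ X) (ε : ℝ) {x y : X} (h : y ∈ locStable T ε x) :
    T y ∈ locStable T ε (T x) := fun n => by
  simpa only [Function.iterate_succ_apply] using h (n + 1)

theorem locUnstable_map (T : X ≃ₜ X) (ε : ℝ) {x y : X} (h : y ∈ locUnstable T ε x)
    (h1 : dist (T y) (T x) ≤ ε) : T y ∈ locUnstable T ε (T x) := fun n => by
  cases n with
  | zero => simpa using h1
  | succ n => simpa only [Function.iterate_succ_apply, T.symm_apply_apply] using h n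

theorem stable_contract (T : X ≃ₜ X) {ε θ : ℝ} (hθ : 0 ≤ θ)
    (hc : ∀ y y' y'' : X, y' ∈ locStable T ε y → y'' ∈ locStable T ε y →
      dist (T y') (T y'') ≤ θ * dist y' y'') (n : ℕ) :
    ∀ y y' y'' : X, y' ∈ locStable T ε y → y'' ∈ locStable T ε y →
      dist ((T : X → X)^[n] y') ((T : X → X)^[n] y'') ≤ θ ^ n * dist y' y'' := by
  induction n with
  | zero => intro y y' y'' _ _; simp
  | succ n ih =>
    intro y y' y'' h1 h2
    simp only [Function.iterate_succ_apply]
    calc _ ≤ θ ^ n * dist (T y') (T y'') :=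
          ih _ _ _ (locStable_map T ε h1) (locStable_map T ε h2)
      _ ≤ θ ^ n * (θ * dist y' y'') := by gcongr; exact hc _ _ _ h1 h2
      _ = _ := by ring

theorem unstable_expand (T : X ≃ₜ X) {ε θ : ℝ} (hε : 0 ≤ ε) (hθ : 0 ≤ θ)
    (hc : ∀ y y' y'' : X, y' ∈ locUnstable T ε y → y'' ∈ locUnstable T ε y →
      dist (T.symm y') (T.symm y'') ≤ θ * dist y' y'') (y y' : X)
    (hy : y' ∈ locUnstable T ε y) (n : ℕ)
    (hn : ∀ i ≤ n, dist ((T : X → X)^[i] y') ((T : X → X)^[i] y) ≤ ε) :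
    (T : X → X)^[n] y' ∈ locUnstable T ε ((T : X → X)^[n] y) ∧
      dist y' y ≤ θ ^ n * dist ((T : X → X)^[n] y') ((T : X → X)^[n] y) := by
  induction n with
  | zero => simpa using hy
  | succ n ih =>
    obtain ⟨h1, h2⟩ := ih fun i hi => hn i (by omega)
    have h3 := hn (n + 1) le_rfl
    simp only [Function.iterate_succ_apply'] at h3 ⊢
    have h4 := locUnstable_map T ε h1 h3
    refine ⟨h4, h2.trans ?_⟩
    have h5 := hc _ _ (T ((T : X → X)^[n] y)) h4 (fun k => by simpa using hε)
    simp only [T.symm_apply_apply] at h5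
    calc _ ≤ θ ^ n * (θ * dist (T ((T : X → X)^[n] y')) (T ((T : X → X)^[n] y))) := by gcongr
      _ = _ := by ring

theorem lip_iter (T : X ≃ₜ X) {K : ℝ} (hK : 0 ≤ K)
    (hc : ∀ a b : X, dist (T a) (T b) ≤ K * dist a b) (n : ℕ) (a b : X) :
    dist ((T : X → X)^[n] a) ((T : X → X)^[n] b) ≤ K ^ n * dist a b := by
  induction n with
  | zero => simp
  | succ n ih =>
    simp only [Function.iterate_succ_apply']
    calc _ ≤ K * dist ((T : X → X)^[n] a) ((T : X → X)^[n] b) := hc _ _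
      _ ≤ K * (K ^ n * dist a b) := by gcongr
      _ = _ := by ring

/-- The closed set of quadruples, presented by continuous maps. -/
theorem isClosed_locStable (T : X ≃ₜ X) (ε : ℝ) {Z : Type*} [TopologicalSpace Z]
    (f g : Z → X) (hf : Continuous f) (hg : Continuous g) :
    IsClosed {z | f z ∈ locStable T ε (g z)} := by
  have : {z | f z ∈ locStable T ε (g z)} =
      ⋂ n : ℕ, {z | dist ((T : X → X)^[n] (f z)) ((T : X → X)^[n] (g z)) ≤ ε} := by
    ext z; simp [locStable]
  rw [this]
  exact isClosed_iInter fun n => isClosed_le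
    (((T.continuous.iterate n).comp hf).dist ((T.continuous.iterate n).comp hg)) continuous_const

theorem isClosed_locUnstable (T : X ≃ₜ X) (ε : ℝ) {Z : Type*} [TopologicalSpace Z]
    (f g : Z → X) (hf : Continuous f) (hg : Continuous g) :
    IsClosed {z | f z ∈ locUnstable T ε (g z)} :=
  isClosed_locStable T.symm ε f g hf hg

end helpers

/-- **Proposition 2.5** (Bochi–Garibaldi, "Extremal Norms for Fiber-Bunched Cocycles"):
transverse Hölder regularity of stable sets of a hyperbolic homeomorphism. -/
theorem transverse_regularity_base {X : Type*} [MetricSpace X] [CompactSpace X]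
    (T : X ≃ₜ X) (ε₀ ε₁ : ℝ) (lu ls : X → ℝ) (br : X → X → X) (C₀ : ℝ)
    (hT : HypHomeo T ε₀ ε₁ lu ls br C₀) :
    ∃ κ C : ℝ, 0 < κ ∧ κ ≤ 1 ∧ 0 < C ∧
      ∀ x x' y y' : X,
        x' ∈ locUnstable T ε₀ x → y' ∈ locUnstable T ε₀ y →
        y ∈ locStable T ε₀ x → y' ∈ locStable T ε₀ x' →
        dist y y' ≤ C * dist x x' ^ κ := by
  obtain ⟨K0, hK0⟩ := hT.lipschitz_T
  have hε := hT.eps0_pos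
  obtain ⟨l1, hl1, hlu⟩ := isCompact_univ.exists_forall_le' (a := 0) hT.cont_lu.continuousOn
    (fun x _ => hT.pos_lu x)
  obtain ⟨l2, hl2, hls⟩ := isCompact_univ.exists_forall_le' (a := 0) hT.cont_ls.continuousOn
    (fun x _ => hT.pos_ls x)
  obtain ⟨l, hl, hll1, hll2⟩ : ∃ l : ℝ, 0 < l ∧ l ≤ l1 ∧ l ≤ l2 :=
    ⟨min l1 l2, lt_min hl1 hl2, min_le_left _ _, min_le_right _ _⟩
  obtain ⟨θ, hθ⟩ : ∃ θ, θ = Real.exp (-l) := ⟨_, rfl⟩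
  have hθ0 : 0 < θ := hθ ▸ Real.exp_pos _
  have hθ1 : θ < 1 := by rw [hθ, Real.exp_lt_one_iff]; linarith
  have hcu : ∀ y y' y'' : X, y' ∈ locUnstable T ε₀ y → y'' ∈ locUnstable T ε₀ y →
      dist (T.symm y') (T.symm y'') ≤ θ * dist y' y'' := fun y y' y'' h1 h2 =>
    (hT.contract_u y y' y'' h1 h2).trans (by
      rw [hθ]; gcongr; exact hll1.trans (hlu y (Set.mem_univ _)))
  have hcs : ∀ y y' y'' : X, y' ∈ locStable T ε₀ y → y'' ∈ locStable T ε₀ y →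
      dist (T y') (T y'') ≤ θ * dist y' y'' := fun y y' y'' h1 h2 =>
    (hT.contract_s y y' y'' h1 h2).trans (by
      rw [hθ]; gcongr; exact hll2.trans (hls y (Set.mem_univ _)))
  obtain ⟨K, hKl, hKK⟩ : ∃ K : ℝ, Real.exp l ≤ K ∧ (K0 : ℝ) ≤ K :=
    ⟨max (Real.exp l) K0, le_max_left _ _, le_max_right _ _⟩
  have hK1 : 1 < K := lt_of_lt_of_le (by simpa using hl) hKl
  have hK0' : 0 < K := by linarith
  have hlip : ∀ a b : X, dist (T a) (T b) ≤ K * dist a b := fun a b =>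
    (hK0.dist_le_mul a b).trans (by gcongr)
  have hlogK : l ≤ Real.log K := (Real.le_log_iff_exp_le hK0').2 hKl
  have hlogpos : 0 < Real.log K := by linarith
  obtain ⟨κ, hκ⟩ : ∃ κ, κ = l / Real.log K := ⟨_, rfl⟩
  have hκ0 : 0 < κ := hκ ▸ div_pos hl hlogpos
  have hκ1 : κ ≤ 1 := hκ ▸ (div_le_one hlogpos).2 hlogK
  have hKκ : K ^ κ = θ⁻¹ := by
    rw [Real.rpow_def_of_pos hK0', hκ, hθ, mul_div_cancel₀ _ hlogpos.ne', Real.exp_neg, inv_inv]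
  obtain ⟨m, hm⟩ := exists_pow_lt_of_lt_one (show (0 : ℝ) < 1 / 4 by norm_num) hθ1
  -- rigidity when `x = x'`
  have key0 : ∀ x y y' : X, y' ∈ locUnstable T ε₀ y → y ∈ locStable T ε₀ x →
      y' ∈ locStable T ε₀ x → y = y' := by
    intro x y y' h1 h2 h3
    have hsp := hT.bracket_spec y y (by simpa using hT.eps1_pos.le)
    have hy : y ∈ locUnstable T ε₀ y ∩ locStable T ε₀ y :=
      ⟨fun n => by simpa using hε.le, fun n => by simpa using hε.le⟩
    have hy' : y' ∈ locUnstable T ε₀ y ∩ locStable T ε₀ y := by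
      refine ⟨h1, fun n => ?_⟩
      have h0 : dist y' y ≤ ε₀ := by simpa using h1 0
      calc _ ≤ θ ^ n * dist y' y := stable_contract T hθ0.le hcs n x y' y h3 h2
        _ ≤ 1 * dist y' y := by gcongr; exact pow_le_one₀ hθ0.le hθ1.le
        _ ≤ ε₀ := by linarith
    rw [hsp] at hy hy'
    exact (Set.mem_singleton_iff.1 hy).trans (Set.mem_singleton_iff.1 hy').symm
  obtain ⟨a, ha, hcomp⟩ : ∃ a : ℝ, 0 < a ∧ ∀ x x' y y' : X,
        x' ∈ locUnstable T ε₀ x → y' ∈ locUnstable T ε₀ y →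
        y ∈ locStable T ε₀ x → y' ∈ locStable T ε₀ x' → ε₀ / K ^ m ≤ dist y y' →
        a ≤ dist x x' := by
    have hS : IsCompact {p : (X × X) × (X × X) | p.2.2 ∈ locUnstable T ε₀ p.2.1 ∧
        p.2.1 ∈ locStable T ε₀ p.1.1 ∧ p.2.2 ∈ locStable T ε₀ p.1.2 ∧
        ε₀ / K ^ m ≤ dist p.2.1 p.2.2} := by
      apply IsClosed.isCompact
      refine (isClosed_locUnstable T ε₀ _ _ (by fun_prop) (by fun_prop)).inter
        ((isClosed_locStable T ε₀ _ _ (by fun_prop) (by fun_prop)).inter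
        ((isClosed_locStable T ε₀ _ _ (by fun_prop) (by fun_prop)).inter
        (isClosed_le continuous_const (continuous_snd.fst.dist continuous_snd.snd))))
    obtain ⟨a, ha, h⟩ := hS.exists_forall_le' (a := 0) (f := fun p => dist p.1.1 p.1.2)
      (by fun_prop) (by
        rintro ⟨⟨x, x'⟩, ⟨y, y'⟩⟩ ⟨h1, h2, h3, h4⟩
        simp only at h1 h2 h3 h4 ⊢
        rw [dist_pos]
        rintro rfl
        rw [key0 x y y' h1 h2 h3, dist_self] at h4
        have : 0 < ε₀ / K ^ m := by positivity
        linarith)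
    exact ⟨a, ha, fun x x' y y' _ h1 h2 h3 h4 => h ((x, x'), (y, y')) ⟨h1, h2, h3, h4⟩⟩
  obtain ⟨η, hη, hηa, hηε⟩ : ∃ η : ℝ, 0 < η ∧ η ≤ a ∧ η ≤ ε₀ / 2 :=
    ⟨min a (ε₀ / 2), lt_min ha (by positivity), min_le_left _ _, min_le_right _ _⟩
  have hηκ : 0 < η ^ κ := Real.rpow_pos_of_pos hη _
  refine ⟨κ, ε₀ * θ⁻¹ * (η ^ κ)⁻¹, hκ0, hκ1, by positivity, ?_⟩
  intro x x' y y' hx hy hyx hyx'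
  have hθinv : 1 ≤ θ⁻¹ := (one_le_inv₀ hθ0).2 hθ1.le
  rcases le_or_gt η (dist x x') with hd | hd
  · have h1 : dist y y' ≤ ε₀ := by rw [dist_comm]; simpa using hy 0
    have h2 : η ^ κ ≤ dist x x' ^ κ := Real.rpow_le_rpow hη.le hd hκ0.le
    calc dist y y' ≤ ε₀ * 1 * ((η ^ κ)⁻¹ * η ^ κ) := by
          rw [inv_mul_cancel₀ hηκ.ne']; linarith
      _ ≤ ε₀ * θ⁻¹ * ((η ^ κ)⁻¹ * dist x x' ^ κ) := by gcongr
      _ = _ := by ring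
  rcases eq_or_ne x x' with rfl | hne
  · rw [key0 x y y' hy hyx hyx', dist_self]; positivity
  have hδ : 0 < dist x x' := dist_pos.2 hne
  obtain ⟨n, hn1, hn2⟩ := exists_nat_pow_near ((one_le_div hδ).2 hd.le) hK1
  rw [le_div_iff₀ hδ] at hn1
  rw [div_lt_iff₀ hδ] at hn2
  have hyy : dist y y' < ε₀ / K ^ m := by
    by_contra! h
    have := hcomp x x' y y' hx hy hyx hyx' h
    linarith
  have hclose : ∀ i ≤ n, dist ((T : X → X)^[i] y') ((T : X → X)^[i] y) ≤ ε₀ := by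
    intro i hi
    rcases le_total i m with him | him
    · calc _ ≤ K ^ i * dist y' y := lip_iter T hK0'.le hlip i y' y
        _ ≤ K ^ m * (ε₀ / K ^ m) := by
          rw [dist_comm]; gcongr; exact hK1.le
        _ = ε₀ := by field_simp
    · have hself : ∀ z : X, z ∈ locStable T ε₀ z := fun z n => by simpa using hε.le
      have hp : θ ^ i ≤ 1 / 4 := (pow_le_pow_of_le_one hθ0.le hθ1.le him).trans hm.le
      have e1 : dist ((T : X → X)^[i] y') ((T : X → X)^[i] x') ≤ 1 / 4 * ε₀ :=
        (stable_contract T hθ0.le hcs i x' y' x' hyx' (hself _)).trans (by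
          gcongr; simpa using hyx' 0)
      have e2 : dist ((T : X → X)^[i] y) ((T : X → X)^[i] x) ≤ 1 / 4 * ε₀ :=
        (stable_contract T hθ0.le hcs i x y x hyx (hself _)).trans (by
          gcongr; simpa using hyx 0)
      have e3 : dist ((T : X → X)^[i] x) ((T : X → X)^[i] x') ≤ η :=
        (lip_iter T hK0'.le hlip i x x').trans (le_trans (by gcongr; exact hK1.le) hn1)
      rw [dist_comm] at e3
      have t1 := dist_triangle ((T : X → X)^[i] y') ((T : X → X)^[i] x') ((T : X → X)^[i] y)
      have t2 := dist_triangle ((T : X → X)^[i] x') ((T : X → X)^[i] x) ((T : X → X)^[i] y)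
      rw [dist_comm ((T : X → X)^[i] x) ((T : X → X)^[i] y)] at t2
      linarith
  have hfin := (unstable_expand T hε.le hθ0.le hcu y y' hy n hclose).2
  have hpow : η ^ κ ≤ (θ⁻¹) ^ (n + 1) * dist x x' ^ κ := by
    calc η ^ κ ≤ (K ^ (n + 1) * dist x x') ^ κ := Real.rpow_le_rpow hη.le hn2.le hκ0.le
      _ = (K ^ κ) ^ (n + 1) * dist x x' ^ κ := by
        rw [Real.mul_rpow (by positivity) hδ.le, ← Real.rpow_natCast K, ← Real.rpow_mul hK0'.le,
          mul_comm ((n + 1 : ℕ) : ℝ) κ, Real.rpow_mul hK0'.le, Real.rpow_natCast]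
      _ = _ := by rw [hKκ]
  have hpow2 : θ ^ n * η ^ κ ≤ θ⁻¹ * dist x x' ^ κ := by
    calc θ ^ n * η ^ κ ≤ θ ^ n * ((θ⁻¹) ^ (n + 1) * dist x x' ^ κ) := by gcongr
      _ = (θ * θ⁻¹) ^ n * (θ⁻¹ * dist x x' ^ κ) := by rw [mul_pow]; ring
      _ = _ := by rw [mul_inv_cancel₀ hθ0.ne']; simp
  rw [dist_comm]
  calc dist y' y ≤ θ ^ n * ε₀ := hfin.trans (by gcongr; exact hclose n le_rfl)
    _ = ε₀ * (η ^ κ)⁻¹ * (θ ^ n * η ^ κ) := by field_simp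
    _ ≤ ε₀ * (η ^ κ)⁻¹ * (θ⁻¹ * dist x x' ^ κ) := by gcongr
    _ = _ := by ring
end

section
/- Let (X,d) be a compact metric space and θ > 0 such that the algebra of θ-Hölder functions on X is normal. Let 0 < a < 1, ε₁ > 0, and set θ̄ := max{θ, 1}. Then there exists a function ζ : X × X → [0,1] which is θ̄-Hölder with respect to the metric D((x,y),(x',y')) := max{d(x,x'), d(y,y')}, such that ζ(x,y) = 1 whenever d(x,y) ≤ aε₁ and ζ(x,y) = 0 whenever d(x,y) ≥ ε₁. (Lemma 5.5 of the paper.) -/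
/-- **Lemma 5.5** of Bochi–Garibaldi, "Extremal Norms for Fiber-Bunched Cocycles":
existence of a `max θ 1`-Hölder bump function `ζ` on `X × X` (with the max metric) which
equals `1` when `d(x,y) ≤ a·ε₁` and `0` when `d(x,y) ≥ ε₁`; here the algebra of θ-Hölder
functions on the compact metric space `X` is assumed to be normal. -/
theorem exists_holder_bump {X : Type*} [MetricSpace X] [CompactSpace X]
    (θ : ℝ) (hθ : 0 < θ)
    (hnormal : ∀ K₁ K₂ : Set X, IsCompact K₁ → IsCompact K₂ → Disjoint K₁ K₂ →
      ∃ g : X → ℝ, (∃ C : ℝ, ∀ x y : X, |g x - g y| ≤ C * dist x y ^ θ) ∧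
        (∀ x, g x ∈ Set.Icc (0 : ℝ) 1) ∧ (∀ x ∈ K₁, g x = 0) ∧ (∀ x ∈ K₂, g x = 1))
    (a ε₁ : ℝ) (ha0 : 0 < a) (ha1 : a < 1) (hε : 0 < ε₁) :
    ∃ ζ : X → X → ℝ,
      (∃ C : ℝ, ∀ x y x' y' : X,
        |ζ x y - ζ x' y'| ≤ C * max (dist x x') (dist y y') ^ max θ 1) ∧
      (∀ x y, ζ x y ∈ Set.Icc (0 : ℝ) 1) ∧
      (∀ x y, dist x y ≤ a * ε₁ → ζ x y = 1) ∧
      (∀ x y, ε₁ ≤ dist x y → ζ x y = 0) := by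
  have hmax : ∀ u v : ℝ, |max 0 u - max 0 v| ≤ |u - v| := fun u v => by
    simpa using abs_max_sub_max_le_max 0 u 0 v
  have hmin : ∀ u v : ℝ, |min 1 u - min 1 v| ≤ |u - v| := fun u v => by
    simpa using abs_min_sub_min_le_max 1 u 1 v
  rcases le_total θ 1 with h1 | h1
  · rw [max_eq_right h1]
    have hpos : 0 < ε₁ - a * ε₁ := by nlinarith
    refine ⟨fun x y => max 0 (min 1 ((ε₁ - dist x y) / (ε₁ - a * ε₁))),
      ⟨2 / (ε₁ - a * ε₁), ?_⟩, ?_, ?_, ?_⟩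
    · intro x y x' y'
      have e1 : |max 0 (min 1 ((ε₁ - dist x y) / (ε₁ - a * ε₁)))
          - max 0 (min 1 ((ε₁ - dist x' y') / (ε₁ - a * ε₁)))| ≤
          |(ε₁ - dist x y) / (ε₁ - a * ε₁) - (ε₁ - dist x' y') / (ε₁ - a * ε₁)| :=
        (hmax _ _).trans (hmin _ _)
      refine e1.trans ?_
      rw [← sub_div, abs_div, abs_of_pos hpos, Real.rpow_one, div_mul_eq_mul_div]
      gcongr
      have := dist_dist_dist_le x y x' y'
      rw [Real.dist_eq, abs_sub_comm] at this
      have e2 : ε₁ - dist x y - (ε₁ - dist x' y') = dist x' y' - dist x y := by ring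
      rw [e2]
      linarith [le_max_left (dist x x') (dist y y'), le_max_right (dist x x') (dist y y')]
    · intro x y
      exact ⟨le_max_left _ _, max_le zero_le_one (min_le_left _ _)⟩
    · intro x y h
      have : 1 ≤ (ε₁ - dist x y) / (ε₁ - a * ε₁) := by
        rw [le_div_iff₀ hpos]; linarith
      simp [min_eq_left this]
    · intro x y h
      have : (ε₁ - dist x y) / (ε₁ - a * ε₁) ≤ 0 :=
        div_nonpos_of_nonpos_of_nonneg (by linarith) hpos.le
      exact max_eq_left ((min_le_right _ _).trans this)
  · rw [max_eq_left h1]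
    obtain ⟨r, hr⟩ : ∃ r, r = (1 - a) * ε₁ / 4 := ⟨_, rfl⟩
    have hr0 : 0 < r := by
      have : 0 < (1 - a) * ε₁ := mul_pos (by linarith) hε
      linarith
    have hr4 : 4 * r + a * ε₁ = ε₁ := by rw [hr]; ring
    have key : ∀ (s : ℝ) (p : X), ∃ g : X → ℝ,
        (∃ C : ℝ, 0 ≤ C ∧ ∀ x y : X, |g x - g y| ≤ C * dist x y ^ θ) ∧
        (∀ x, 0 ≤ g x ∧ g x ≤ 1) ∧ (∀ x, s + r ≤ dist x p → g x = 0) ∧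
        (∀ x, dist x p ≤ s → g x = 1) := by
      intro s p
      obtain ⟨g, ⟨C, hC⟩, h01, h0, h1⟩ := hnormal {x | s + r ≤ dist x p} {x | dist x p ≤ s}
        (isClosed_le (by fun_prop) (by fun_prop)).isCompact
        (isClosed_le (by fun_prop) (by fun_prop)).isCompact
        (by
          rw [Set.disjoint_left]
          intro x hx hx'
          simp only [Set.mem_setOf_eq] at hx hx'
          linarith)
      refine ⟨g, ⟨|C|, abs_nonneg C, fun x y => (hC x y).trans ?_⟩, fun x => h01 x, h0, h1⟩
      gcongr
      exact le_abs_self C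
    choose g hg g01 g0 g1 using key r
    choose h hh h01 h0 h1 using key (r + a * ε₁)
    choose C hC0 hC using hg
    choose C' hC'0 hC' using hh
    obtain ⟨t, -, ht⟩ := (isCompact_univ (X := X)).elim_nhds_subcover (fun p => Metric.ball p r)
      (fun p _ => Metric.ball_mem_nhds p hr0)
    have nn : ∀ x y p, 0 ≤ g p x * h p y := fun x y p => mul_nonneg (g01 p x).1 (h01 p y).1
    refine ⟨fun x y => min 1 (∑ p ∈ t, g p x * h p y), ⟨∑ p ∈ t, (C p + C' p), ?_⟩, ?_, ?_, ?_⟩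
    · intro x y x' y'
      refine (hmin _ _).trans ?_
      rw [← Finset.sum_sub_distrib, Finset.sum_mul]
      refine (Finset.abs_sum_le_sum_abs _ _).trans (Finset.sum_le_sum fun p _ => ?_)
      have e : g p x * h p y - g p x' * h p y'
          = (g p x - g p x') * h p y + g p x' * (h p y - h p y') := by ring
      have b1 : |(g p x - g p x') * h p y| ≤ C p * max (dist x x') (dist y y') ^ θ := by
        rw [abs_mul, abs_of_nonneg (h01 p y).1]
        refine (mul_le_of_le_one_right (abs_nonneg _) (h01 p y).2).trans ((hC p x x').trans ?_)
        have := hC0 p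
        gcongr
        exact le_max_left _ _
      have b2 : |g p x' * (h p y - h p y')| ≤ C' p * max (dist x x') (dist y y') ^ θ := by
        rw [abs_mul, abs_of_nonneg (g01 p x').1]
        refine (mul_le_of_le_one_left (abs_nonneg _) (g01 p x').2).trans ((hC' p y y').trans ?_)
        have := hC'0 p
        gcongr
        exact le_max_right _ _
      rw [e, add_mul]
      exact (abs_add_le _ _).trans (add_le_add b1 b2)
    · intro x y
      exact ⟨le_min zero_le_one (Finset.sum_nonneg fun p _ => nn x y p), min_le_left _ _⟩
    · intro x y hxy
      refine min_eq_left ?_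
      obtain ⟨p, hp, hxp⟩ := Set.mem_iUnion₂.1 (ht (Set.mem_univ x))
      rw [Metric.mem_ball] at hxp
      have e : g p x * h p y = 1 := by
        rw [g1 p x hxp.le, h1 p y, one_mul]
        have := dist_triangle y x p
        rw [dist_comm y x] at this
        linarith
      rw [← e]
      exact Finset.single_le_sum (f := fun p => g p x * h p y) (fun p _ => nn x y p) hp
    · intro x y hxy
      have e : ∑ p ∈ t, g p x * h p y = 0 := by
        refine Finset.sum_eq_zero fun p _ => ?_
        by_cases hx : r + r ≤ dist x p
        · rw [g0 p x hx, zero_mul]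
        · rw [h0 p y, mul_zero]
          have := dist_triangle_right x y p
          linarith
      simp only [e]
      norm_num
end

section
/- Let T be a hyperbolic homeomorphism of a compact metric space (X,d) with constant ε₀. Let f : X → ℝ be continuous and strictly positive, and let a ∈ (0,1). Then there exists b ≥ 0 such that for every z ∈ X, every n ≥ 0, and every z' ∈ W^s_{ε₀}(z) ∪ T^{-n}(W^u_{ε₀}(T^n z)), one has f^{(n)}(z') ≥ a·f^{(n)}(z) − b, where f^{(n)} := f + f∘T + ··· + f∘T^{n−1} (and f^{(0)} := 0). (Lemma A.7 of the paper.) -/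
theorem aux_sum (g : ℕ → ℝ) (N : ℕ) (M : ℝ) (hM : 0 ≤ M) (h1 : ∀ j, g j ≤ M)
    (h2 : ∀ j, N ≤ j → g j ≤ 0) (n : ℕ) : ∑ j ∈ Finset.range n, g j ≤ N * M := by
  have key : ∀ n : ℕ, ∑ j ∈ Finset.range n, g j ≤ (min n N : ℕ) * M := by
    intro n
    induction n with
    | zero => simp
    | succ k ih =>
      rw [Finset.sum_range_succ]
      rcases lt_or_ge k N with hk | hk
      · rw [min_eq_left hk.le] at ih
        rw [min_eq_left (Nat.succ_le_of_lt hk)]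
        push_cast
        have := h1 k
        linarith
      · rw [min_eq_right hk] at ih
        rw [min_eq_right (by omega)]
        have := h2 k hk
        linarith
  refine (key n).trans ?_
  have : ((min n N : ℕ) : ℝ) ≤ N := by exact_mod_cast min_le_right n N
  exact mul_le_mul_of_nonneg_right this hM

theorem aux_rev {X : Type*} [MetricSpace X] (T : X ≃ₜ X) (F : X → ℝ) (n : ℕ) (z : X) :
    ∑ j ∈ Finset.range n, F ((T : X → X)^[j] z) =
      ∑ j ∈ Finset.range n, F ((T.symm : X → X)^[j + 1] ((T : X → X)^[n] z)) := by
  induction n with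
  | zero => simp
  | succ k ih =>
    rw [Finset.sum_range_succ, Finset.sum_range_succ', ih]
    simp only [Function.iterate_succ_apply' T k, Function.iterate_succ_apply T.symm,
      Homeomorph.symm_apply_apply, Function.iterate_zero, id]

theorem aux_core {X : Type*} [MetricSpace X] [CompactSpace X] [Nonempty X]
    (S : X → X) (ε : ℝ) (l : X → ℝ) (hl : Continuous l) (hlpos : ∀ x, 0 < l x)
    (hc : ∀ x y, (∀ n : ℕ, dist (S^[n] y) (S^[n] x) ≤ ε) →
      dist (S y) (S x) ≤ Real.exp (-l x) * dist y x)
    (f : X → ℝ) (hf : Continuous f) (hfpos : ∀ x, 0 < f x)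
    (a : ℝ) (ha1 : a < 1) :
    ∃ N : ℕ, ∀ x y, (∀ n : ℕ, dist (S^[n] y) (S^[n] x) ≤ ε) → ∀ j, N ≤ j →
      a * f (S^[j] x) - f (S^[j] y) ≤ 0 := by
  obtain ⟨p, -, hp⟩ := isCompact_univ.exists_isMinOn Set.univ_nonempty hl.continuousOn
  obtain ⟨q, -, hq⟩ := isCompact_univ.exists_isMinOn Set.univ_nonempty hf.continuousOn
  have hp' : ∀ x, l p ≤ l x := fun x => hp (Set.mem_univ x)
  have hq' : ∀ x, f q ≤ f x := fun x => hq (Set.mem_univ x)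
  have hu := CompactSpace.uniformContinuous_of_continuous hf
  obtain ⟨δ, hδ, hd⟩ := Metric.uniformContinuous_iff.1 hu ((1 - a) * f q)
    (mul_pos (by linarith) (hfpos q))
  have hc1 : Real.exp (-l p) < 1 := by
    rw [Real.exp_lt_one_iff]; linarith [hlpos p]
  have hlim : Filter.Tendsto (fun n : ℕ => Real.exp (-l p) ^ n * ε) Filter.atTop (nhds 0) := by
    simpa using (tendsto_pow_atTop_nhds_zero_of_lt_one (Real.exp_pos _).le hc1).mul_const ε
  obtain ⟨N, hN⟩ := Filter.eventually_atTop.1 (hlim.eventually (gt_mem_nhds hδ))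
  refine ⟨N, fun x y hxy j hj => ?_⟩
  have hcon : ∀ k : ℕ, dist (S^[k] y) (S^[k] x) ≤ Real.exp (-l p) ^ k * ε := by
    intro k
    induction k with
    | zero => simpa using hxy 0
    | succ k ih =>
      rw [Function.iterate_succ_apply', Function.iterate_succ_apply']
      have h1 := hc (S^[k] x) (S^[k] y) (fun n => by
        rw [← Function.iterate_add_apply, ← Function.iterate_add_apply]; exact hxy _)
      have h2 : Real.exp (-l (S^[k] x)) ≤ Real.exp (-l p) :=
        Real.exp_le_exp.2 (by linarith [hp' (S^[k] x)])
      calc _ ≤ _ := h1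
        _ ≤ Real.exp (-l p) * (Real.exp (-l p) ^ k * ε) :=
          mul_le_mul h2 ih dist_nonneg (Real.exp_pos _).le
        _ = _ := by ring
  have h3 := hd ((hcon j).trans_lt (hN j hj))
  rw [Real.dist_eq] at h3
  have h4 := (abs_lt.1 h3).1
  have h5 : (1 - a) * f q ≤ (1 - a) * f (S^[j] x) :=
    mul_le_mul_of_nonneg_left (hq' _) (by linarith)
  linarith

/-- **Lemma A.7** of Bochi–Garibaldi, "Extremal Norms for Fiber-Bunched Cocycles":
for a continuous strictly positive `f` and `a ∈ (0,1)` there is `b ≥ 0` such that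
Birkhoff sums satisfy `f⁽ⁿ⁾(z') ≥ a·f⁽ⁿ⁾(z) − b` whenever `z' ∈ W^s_{ε₀}(z)` or
`z' ∈ T^{-n}(W^u_{ε₀}(Tⁿ z))`. -/
theorem birkhoff_sum_comparison {X : Type*} [MetricSpace X] [CompactSpace X]
    (T : X ≃ₜ X) (ε₀ ε₁ : ℝ) (lu ls : X → ℝ) (br : X → X → X) (C₀ : ℝ)
    (hT : HypHomeo T ε₀ ε₁ lu ls br C₀)
    (f : X → ℝ) (hf : Continuous f) (hfpos : ∀ x, 0 < f x)
    (a : ℝ) (ha0 : 0 < a) (ha1 : a < 1) :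
    ∃ b : ℝ, 0 ≤ b ∧ ∀ (z : X) (n : ℕ) (z' : X),
      (z' ∈ locStable T ε₀ z ∨
        (T : X → X)^[n] z' ∈ locUnstable T ε₀ ((T : X → X)^[n] z)) →
      a * (∑ j ∈ Finset.range n, f ((T : X → X)^[j] z)) - b ≤
        ∑ j ∈ Finset.range n, f ((T : X → X)^[j] z') := by
  rcases isEmpty_or_nonempty X with hX | hX
  · exact ⟨0, le_rfl, fun z => (hX.false z).elim⟩
  have he := hT.eps0_pos.le
  obtain ⟨N₁, h₁⟩ := aux_core T ε₀ ls hT.cont_ls hT.pos_ls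
    (fun x y h => hT.contract_s x y x h (fun n => by simpa using he)) f hf hfpos a ha1
  obtain ⟨N₂, h₂⟩ := aux_core T.symm ε₀ lu hT.cont_lu hT.pos_lu
    (fun x y h => hT.contract_u x y x h (fun n => by simpa using he)) f hf hfpos a ha1
  obtain ⟨q, -, hq⟩ := isCompact_univ.exists_isMaxOn Set.univ_nonempty hf.continuousOn
  have hq' : ∀ x, f x ≤ f q := fun x => hq (Set.mem_univ x)
  have hM := (hfpos q).le
  have hb : ∀ x y, a * f x - f y ≤ f q := by
    intro x y
    nlinarith [hq' x, hfpos x, hfpos y]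
  have hn1 : 0 ≤ (N₁ : ℝ) * f q := by positivity
  have hn2 : 0 ≤ (N₂ : ℝ) * f q := by positivity
  refine ⟨N₁ * f q + N₂ * f q, by positivity, fun z n z' h => ?_⟩
  rcases h with h | h
  · have := aux_sum (fun j => a * f ((T : X → X)^[j] z) - f ((T : X → X)^[j] z')) N₁ (f q) hM
      (fun j => hb _ _) (fun j hj => h₁ z z' h j hj) n
    rw [Finset.sum_sub_distrib, ← Finset.mul_sum] at this
    linarith
  · rw [aux_rev T f n z, aux_rev T f n z']
    have := aux_sum (fun j => a * f ((T.symm : X → X)^[j + 1] ((T : X → X)^[n] z)) -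
      f ((T.symm : X → X)^[j + 1] ((T : X → X)^[n] z'))) N₂ (f q) hM
      (fun j => hb _ _) (fun j hj => h₂ _ _ h (j + 1) (by omega)) n
    rw [Finset.sum_sub_distrib, ← Finset.mul_sum] at this
    linarith
end

section
/- Let f : Y → Y be an expansive homeomorphism of a compact metric space (Y,ρ). Then for every sufficiently small ε > 0: for each n ≥ 1 the quantity R(ε, ρ_{n,f}, f) is finite, and lim_{n→∞} (1/n)·log R(ε, ρ_{n,f}, f) = 0. (Lemma A.10 of the paper.) -/
/-- `dIter f m` is the metric `ρ_{m,f}(x,y) = max_{0 ≤ i < m} ρ(fⁱx, fⁱy)`. -/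
noncomputable def dIter {Y : Type*} [MetricSpace Y] (f : Y → Y) (m : ℕ) (x y : Y) : ℝ :=
  ⨆ i : Fin m, dist (f^[(i : ℕ)] x) (f^[(i : ℕ)] y)

/-- There exists a periodic `(ε, ρm, f)`-pseudoorbit of period `n`. -/
def HasPPO {Y : Type*} (f : Y → Y) (ρm : Y → Y → ℝ) (ε : ℝ) (n : ℕ) : Prop :=
  ∃ x : ZMod n → Y, ∀ i : ZMod n, ρm (f (x i)) (x (i + 1)) < ε

/-- A finite set is `(ε, ρm)`-separated. -/
def IsSeparated {Y : Type*} (ρm : Y → Y → ℝ) (ε : ℝ) (E : Finset Y) : Prop :=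
  ∀ x ∈ E, ∀ y ∈ E, x ≠ y → ε ≤ ρm x y

/-- `S(ε, ρm)`: the maximal cardinality of an `(ε, ρm)`-separated set. -/
noncomputable def sepCount {Y : Type*} (ρm : Y → Y → ℝ) (ε : ℝ) : ℕ :=
  sSup {k : ℕ | ∃ E : Finset Y, IsSeparated ρm ε E ∧ E.card = k}

/-- `R(ε, ρm, f)`: the minimal period of a periodic `(ε, ρm, f)`-pseudoorbit. -/
noncomputable def minPPOPeriod {Y : Type*} (f : Y → Y) (ρm : Y → Y → ℝ) (ε : ℝ) : ℕ :=
  sInf {n : ℕ | 0 < n ∧ HasPPO f ρm ε n}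

/-- The `n`-th iterate of a homeomorphism, for `n : ℤ`. -/
def zIter {Y : Type*} [TopologicalSpace Y] (f : Y ≃ₜ Y) : ℤ → Y → Y
  | Int.ofNat n => (f : Y → Y)^[n]
  | Int.negSucc n => (f.symm : Y → Y)^[n + 1]

/-- A graph without directed cycles of length at most `k` has at most `choose V k` paths. -/
lemma ppo_paths_card {V k : ℕ} (E : Fin V → Fin V → Prop)
    (H : ∀ L < k, ∀ w : ℕ → Fin V, (∀ i < L, E (w i) (w (i + 1))) → ¬ E (w L) (w 0))
    (P : Finset (Fin k → Fin V))
    (hP : ∀ p ∈ P, ∀ i : ℕ, ∀ hi : i + 1 < k, E (p ⟨i, by omega⟩) (p ⟨i + 1, hi⟩)) :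
    P.card ≤ V.choose k := by
  classical
  have key : ∀ p ∈ P, ∀ a b : ℕ, ∀ hb : b < k, ∀ hab : a ≤ b,
      ¬ E (p ⟨b, hb⟩) (p ⟨a, by omega⟩) := by
    intro p hp a b hb hab hE
    refine H (b - a) (by omega)
      (fun i => if h : a + i < k then p ⟨a + i, h⟩ else p ⟨a, by omega⟩) ?_ ?_
    · intro i hi
      have h1 : a + i < k := by omega
      have h2 : a + (i + 1) < k := by omega
      simp only [h1, h2, dif_pos]
      exact hP p hp (a + i) h2
    · have h1 : a + (b - a) = b := by omega
      have h2 : a < k := by omega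
      simpa [h1, hb, h2] using hE
  have inj : ∀ p ∈ P, Function.Injective p := by
    intro p hp
    have aux : ∀ a b : ℕ, ∀ hb : b < k, ∀ hab : a < b, p ⟨b, hb⟩ ≠ p ⟨a, by omega⟩ := by
      intro a b hb hab he
      obtain ⟨b, rfl⟩ : ∃ b', b = b' + 1 := ⟨b - 1, by omega⟩
      have := hP p hp b hb
      rw [he] at this
      exact key p hp a b (by omega) (by omega) this
    rintro ⟨a, ha⟩ ⟨b, hb⟩ he
    rcases lt_trichotomy a b with h | h | h
    · exact absurd he.symm (aux a b hb h)
    · subst h; rfl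
    · exact absurd he (aux b a ha h)
  have hmaps : ∀ p ∈ P, Finset.univ.image p ∈ (Finset.univ : Finset (Fin V)).powersetCard k := by
    intro p hp
    rw [Finset.mem_powersetCard]
    refine ⟨Finset.subset_univ _, ?_⟩
    rw [Finset.card_image_of_injective _ (inj p hp)]
    simp
  have hinj : Set.InjOn (fun p : Fin k → Fin V => Finset.univ.image p) (P : Set _) := by
    intro p hp p' hp' he
    have he' : Finset.univ.image p = Finset.univ.image p' := he
    have hex : ∀ i, ∃ j, p' j = p i := by
      intro i
      have : p i ∈ Finset.univ.image p' := by
        rw [← he']; exact Finset.mem_image_of_mem _ (Finset.mem_univ _)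
      simpa using this
    choose σ hσ using hex
    have σinj : Function.Injective σ := by
      intro a b hab
      apply inj p hp
      rw [← hσ, ← hσ, hab]
    have σsurj : Function.Surjective σ := Finite.surjective_of_injective σinj
    have step : ∀ i : ℕ, ∀ hi : i + 1 < k, σ ⟨i, by omega⟩ < σ ⟨i + 1, hi⟩ := by
      intro i hi
      by_contra hcon
      rw [not_lt] at hcon
      have h1 := hP p hp i hi
      rw [← hσ, ← hσ] at h1
      exact key p' hp' _ _ (σ ⟨i, by omega⟩).2 hcon h1
    have mono : StrictMono σ := by
      have aux : ∀ d a : ℕ, ∀ h : a + d + 1 < k, σ ⟨a, by omega⟩ < σ ⟨a + d + 1, h⟩ := by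
        intro d
        induction d with
        | zero => intro a h; exact step a h
        | succ d ih => intro a h; exact (ih a (by omega)).trans (step (a + d + 1) h)
      rintro ⟨a, ha⟩ ⟨b, hb⟩ hab
      have hab' : a < b := hab
      obtain ⟨d, rfl⟩ : ∃ d, b = a + d + 1 := ⟨b - a - 1, by omega⟩
      exact aux d a hb
    have : σ = id := by
      apply (StrictMono.range_inj mono strictMono_id).1
      rw [σsurj.range_eq]; simp
    funext i
    rw [← hσ i, this]; rfl
  calc P.card ≤ ((Finset.univ : Finset (Fin V)).powersetCard k).card :=
        Finset.card_le_card_of_injOn _ hmaps hinj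
    _ = V.choose k := by rw [Finset.card_powersetCard]; simp

/-- There is a colouring with `q` colours whose classes are `ε`-small for `m` steps. -/
def PpoCol {Y : Type*} [MetricSpace Y] (f : Y → Y) (ε : ℝ) (m q : ℕ) : Prop :=
  ∃ c : Y → Fin q, ∀ x y, c x = c y → ∀ i < m, dist (f^[i] x) (f^[i] y) < ε

lemma PpoCol.of_fintype {Y : Type*} [MetricSpace Y] {f : Y → Y} {ε : ℝ} {m : ℕ}
    {α : Type*} [Fintype α] (c : Y → α)
    (hc : ∀ x y, c x = c y → ∀ i < m, dist (f^[i] x) (f^[i] y) < ε) :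
    PpoCol f ε m (Fintype.card α) :=
  ⟨fun x => Fintype.equivFin α (c x), fun x y h => hc x y ((Fintype.equivFin α).injective h)⟩

lemma PpoCol.add {Y : Type*} [MetricSpace Y] {f : Y → Y} {ε : ℝ} {m n q r : ℕ}
    (h1 : PpoCol f ε m q) (h2 : PpoCol f ε n r) : PpoCol f ε (m + n) (q * r) := by
  obtain ⟨c, hc⟩ := h1
  obtain ⟨d, hd⟩ := h2
  have := PpoCol.of_fintype (f := f) (ε := ε) (m := m + n)
    (fun x => (c x, d (f^[m] x))) (by
      intro x y h i hi
      rw [Prod.mk.injEq] at h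
      by_cases him : i < m
      · exact hc x y h.1 i him
      · have := hd _ _ h.2 (i - m) (by omega)
        rw [← Function.iterate_add_apply, ← Function.iterate_add_apply] at this
        rwa [show i - m + m = i by omega] at this)
  simpa using this

lemma PpoCol.one {Y : Type*} [MetricSpace Y] [CompactSpace Y] (f : Y → Y) {ε : ℝ} (hε : 0 < ε) :
    ∃ q, PpoCol f ε 1 q := by
  obtain ⟨t, -, ht, hcov⟩ := Metric.finite_approx_of_totallyBounded
    (isCompact_univ (X := Y)).totallyBounded (ε / 2) (by positivity)
  have : ∀ x : Y, ∃ y : t, dist x y < ε / 2 := by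
    intro x
    have := hcov (Set.mem_univ x)
    simpa using this
  choose c hc using this
  have := ht.fintype
  refine ⟨_, PpoCol.of_fintype c ?_⟩
  intro x y h i hi
  obtain rfl : i = 0 := by omega
  simp only [Function.iterate_zero, id]
  have h1 := hc x
  have h2 := hc y
  rw [← h] at h2
  calc dist x y ≤ dist x (c x) + dist y (c x) := dist_triangle_right _ _ _
    _ < ε := by linarith

lemma PpoCol.exists {Y : Type*} [MetricSpace Y] [CompactSpace Y] (f : Y → Y) {ε : ℝ} (hε : 0 < ε)
    (m : ℕ) : ∃ q, PpoCol f ε m q := by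
  induction m with
  | zero => exact ⟨1, fun _ => 0, fun _ _ _ i hi => absurd hi (by omega)⟩
  | succ m ih =>
    obtain ⟨q, hq⟩ := ih
    obtain ⟨r, hr⟩ := PpoCol.one f hε
    exact ⟨_, hq.add hr⟩

/-- The minimal number of colours. -/
noncomputable def ppoN {Y : Type*} [MetricSpace Y] (f : Y → Y) (ε : ℝ) (m : ℕ) : ℕ :=
  sInf {q | PpoCol f ε m q}

lemma ppoN_col {Y : Type*} [MetricSpace Y] [CompactSpace Y] (f : Y → Y) {ε : ℝ} (hε : 0 < ε)
    (m : ℕ) : PpoCol f ε m (ppoN f ε m) :=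
  Nat.sInf_mem (s := {q | PpoCol f ε m q}) (PpoCol.exists f hε m)

lemma ppoN_pos {Y : Type*} [MetricSpace Y] [CompactSpace Y] [Nonempty Y] (f : Y → Y) {ε : ℝ}
    (hε : 0 < ε) (m : ℕ) : 0 < ppoN f ε m := by
  obtain ⟨c, -⟩ := ppoN_col f hε m
  have := (c (Classical.arbitrary Y)).2
  omega

lemma ppoN_subadd {Y : Type*} [MetricSpace Y] [CompactSpace Y] [Nonempty Y] (f : Y → Y) {ε : ℝ}
    (hε : 0 < ε) : Subadditive (fun m => Real.log (ppoN f ε m)) := by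
  intro m n
  have h : ppoN f ε (m + n) ≤ ppoN f ε m * ppoN f ε n :=
    Nat.sInf_le ((ppoN_col f hε m).add (ppoN_col f hε n))
  have hm : (0 : ℝ) < ppoN f ε m := by exact_mod_cast ppoN_pos f hε m
  have hn : (0 : ℝ) < ppoN f ε n := by exact_mod_cast ppoN_pos f hε n
  have hmn : (0 : ℝ) < ppoN f ε (m + n) := by exact_mod_cast ppoN_pos f hε (m + n)
  rw [← Real.log_mul hm.ne' hn.ne']
  exact Real.log_le_log hmn (by exact_mod_cast h)

lemma ppo_dIter_lt {Y : Type*} [MetricSpace Y] (f : Y → Y) {ε : ℝ} {n : ℕ} (hn : 1 ≤ n) {x y : Y}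
    (h : ∀ i < n, dist (f^[i] x) (f^[i] y) < ε) : dIter f n x y < ε := by
  have : Nonempty (Fin n) := ⟨⟨0, hn⟩⟩
  obtain ⟨i, hi⟩ := exists_eq_ciSup_of_finite
    (f := fun i : Fin n => dist (f^[(i : ℕ)] x) (f^[(i : ℕ)] y))
  unfold dIter
  rw [← hi]
  exact h i i.2

/-- A cycle of `n`-blocks gives a periodic pseudoorbit. -/
lemma ppo_of_cycle {Y : Type*} [MetricSpace Y] (f : Y → Y) {ε : ℝ} (hε : 0 < ε) {n : ℕ}
    (hn : 1 ≤ n) (L : ℕ) (z : ℕ → Y)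
    (h1 : ∀ i < L, ∀ j < n, dist (f^[j] (f^[n] (z i))) (f^[j] (z (i + 1))) < ε)
    (h2 : ∀ j < n, dist (f^[j] (f^[n] (z L))) (f^[j] (z 0)) < ε) :
    HasPPO f (dIter f n) ε ((L + 1) * n) := by
  have hM : 0 < (L + 1) * n := by positivity
  have : NeZero ((L + 1) * n) := ⟨hM.ne'⟩
  refine ⟨fun i => f^[i.val % n] (z (i.val / n)), fun i => ?_⟩
  apply ppo_dIter_lt f hn
  have hi := ZMod.val_lt i
  have hv : (i + 1).val = (i.val + 1) % ((L + 1) * n) := by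
    rw [ZMod.val_add, ZMod.val_one_eq_one_mod, Nat.add_mod_mod]
  set j := i.val with hj
  have hdm := Nat.div_add_mod j n
  have hr := Nat.mod_lt j hn
  set a := j / n with ha
  set r := j % n with hr'
  have haL : a ≤ L := by
    have : a < L + 1 := Nat.div_lt_of_lt_mul (by rw [mul_comm]; exact hi)
    omega
  intro s hs
  change dist (f^[s] (f (f^[r] (z a)))) (f^[s] (f^[(i + 1).val % n] (z ((i + 1).val / n)))) < ε
  rw [hv, ← Function.iterate_succ_apply' f r (z a)]
  by_cases hrn : r + 1 < n
  · have hlt : j + 1 < (L + 1) * n := by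
      have : n * a ≤ n * L := Nat.mul_le_mul_left _ haL
      nlinarith
    have e1 : (j + 1) / n = a := by
      rw [← hdm, add_assoc, Nat.mul_add_div hn, Nat.div_eq_of_lt hrn, add_zero]
    have e2 : (j + 1) % n = r + 1 := by
      rw [← hdm, add_assoc, Nat.mul_add_mod, Nat.mod_eq_of_lt hrn]
    rw [Nat.mod_eq_of_lt hlt, e1, e2]
    simpa using hε
  · have hrn' : r + 1 = n := by omega
    have hj1 : j + 1 = (a + 1) * n := by rw [← hdm, add_assoc, hrn']; ring
    rw [hj1, Nat.succ_eq_add_one, hrn']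
    by_cases haL' : a < L
    · have hlt : (a + 1) * n < (L + 1) * n := Nat.mul_lt_mul_of_pos_right (by omega) hn
      rw [Nat.mod_eq_of_lt hlt, Nat.mul_mod_left, Nat.mul_div_cancel _ hn]
      exact h1 a haL' s hs
    · have : a = L := by omega
      rw [this, Nat.mod_self, Nat.zero_mod, Nat.zero_div]
      exact h2 s hs

/-- If there are no short cycles, the number of colours for `n * k` steps is small. -/
lemma ppo_exists {Y : Type*} [MetricSpace Y] [CompactSpace Y] (f : Y → Y) {ε : ℝ} (hε : 0 < ε)
    {n k : ℕ} (hn : 1 ≤ n) (h : (ppoN f ε n).choose k < ppoN f ε (n * k)) :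
    ∃ L < k, HasPPO f (dIter f n) ε ((L + 1) * n) := by
  classical
  by_contra hcon
  push Not at hcon
  obtain ⟨c, hc⟩ := ppoN_col f hε n
  refine absurd h (not_lt.2 ?_)
  let code : Y → (Fin k → Fin (ppoN f ε n)) := fun x i => c (f^[n * i] x)
  let P : Finset (Fin k → Fin (ppoN f ε n)) := Finset.univ.filter (fun p => ∃ x, code x = p)
  have hcol : PpoCol f ε (n * k) P.card := by
    have := PpoCol.of_fintype (f := f) (ε := ε) (m := n * k) (α := P)
      (fun x => ⟨code x, by simp [P]⟩) (by
        intro x y hxy i hi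
        have hxy' : code x = code y := congrArg Subtype.val hxy
        have hik : i / n < k := Nat.div_lt_of_lt_mul hi
        have h1 := congrFun hxy' ⟨i / n, hik⟩
        have h2 := hc _ _ h1 (i % n) (Nat.mod_lt _ hn)
        simp only [← Function.iterate_add_apply, Nat.mod_add_div] at h2
        exact h2)
    simpa using this
  refine (Nat.sInf_le (s := {q | PpoCol f ε (n * k) q}) hcol).trans ?_
  refine ppo_paths_card (fun u v => ∃ x, c x = u ∧ c (f^[n] x) = v) ?_ P ?_
  · intro L hL w hw hlast
    refine hcon L hL ?_
    obtain ⟨zL, hzL, hzL'⟩ := hlast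
    have hz : ∀ i, ∃ z, (i < L → c z = w i ∧ c (f^[n] z) = w (i + 1)) ∧
        (i = L → c z = w L ∧ c (f^[n] z) = w 0) := by
      intro i
      by_cases hi : i < L
      · obtain ⟨z, hz⟩ := hw i hi
        exact ⟨z, fun _ => hz, fun h => by omega⟩
      · exact ⟨zL, fun h => absurd h hi, fun _ => ⟨hzL, hzL'⟩⟩
    choose z hz1 hz2 using hz
    have hcz : ∀ i ≤ L, c (z i) = w i := by
      intro i hi
      rcases hi.lt_or_eq with h | h
      · exact (hz1 i h).1
      · rw [h]; exact (hz2 L rfl).1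
    refine ppo_of_cycle f hε hn L z ?_ ?_
    · intro i hi
      exact hc _ _ ((hz1 i hi).2.trans (hcz (i + 1) hi).symm)
    · exact hc _ _ ((hz2 L rfl).2.trans (hcz 0 (Nat.zero_le _)).symm)
  · intro p hp i hi
    obtain ⟨x, rfl⟩ := (Finset.mem_filter.1 hp).2
    refine ⟨f^[n * i] x, rfl, ?_⟩
    simp only [code, ← Function.iterate_add_apply]
    rw [show n + n * i = n * (i + 1) by ring]

lemma ppo_bdd {Y : Type*} [MetricSpace Y] (f : Y → Y) (ε : ℝ) :
    BddBelow (Set.range fun m : ℕ => Real.log (ppoN f ε m) / m) := by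
  refine ⟨0, ?_⟩
  rintro _ ⟨m, rfl⟩
  exact div_nonneg (Real.log_natCast_nonneg _) (Nat.cast_nonneg _)

/-- Explicit bound for the minimal period. -/
lemma ppo_bound {Y : Type*} [MetricSpace Y] [CompactSpace Y] [Nonempty Y] (f : Y → Y) {ε : ℝ}
    (hε : 0 < ε) {n : ℕ} (hn : 1 ≤ n) :
    ∃ M : ℕ, 0 < M ∧ HasPPO f (dIter f n) ε M ∧
      (M : ℝ) ≤ n * (2 * Real.exp (Real.log (ppoN f ε n) - n * (ppoN_subadd f hε).lim + 1)) := by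
  set h := (ppoN_subadd f hε).lim with hh
  have hle : ∀ m : ℕ, m ≠ 0 → h * m ≤ Real.log (ppoN f ε m) := by
    intro m hm
    have := (ppoN_subadd f hε).lim_le_div (ppo_bdd f ε) hm
    have hm' : (0 : ℝ) < m := by positivity
    exact (le_div_iff₀ hm').1 this
  set B := Real.exp (Real.log (ppoN f ε n) - n * h + 1) with hB
  have hB1 : 1 ≤ B := by
    apply Real.one_le_exp
    have := hle n (by omega)
    linarith
  set k := ⌊B⌋₊ + 1 with hk
  have hkB : B < k := by rw [hk]; push_cast; exact Nat.lt_floor_add_one B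
  have hkB' : (k : ℝ) ≤ 2 * B := by
    have := Nat.floor_le (show 0 ≤ B by linarith)
    rw [hk]; push_cast; linarith
  have hk0 : (0 : ℝ) < k := by linarith
  have hV : (0 : ℝ) < ppoN f ε n := by exact_mod_cast ppoN_pos f hε n
  have hlt : (ppoN f ε n).choose k < ppoN f ε (n * k) := by
    have hnk : (0 : ℝ) < ppoN f ε (n * k) := by exact_mod_cast ppoN_pos f hε (n * k)
    have h1 : ((ppoN f ε n).choose k : ℝ) ≤ (ppoN f ε n : ℝ) ^ k / k.factorial :=
      Nat.choose_le_pow_div k _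
    have h2 : (k : ℝ) ^ k / k.factorial ≤ Real.exp k :=
      Real.pow_div_factorial_le_exp _ hk0.le _
    have h3 : Real.exp (h * (n * k)) ≤ ppoN f ε (n * k) := by
      rw [← Real.exp_log hnk]
      apply Real.exp_le_exp.2
      have := hle (n * k) (Nat.mul_ne_zero (by omega) (by omega))
      push_cast at this
      exact this
    have h4 : (ppoN f ε n : ℝ) ^ k / k.factorial ≤
        (ppoN f ε n * Real.exp 1 / k) ^ k := by
      have hkk : (0 : ℝ) < (k : ℝ) ^ k := by positivity
      rw [div_pow, mul_pow, ← Real.exp_nat_mul, mul_one, le_div_iff₀ hkk, div_mul_eq_mul_div,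
        mul_div_assoc]
      exact mul_le_mul_of_nonneg_left h2 (by positivity)
    have h5 : (ppoN f ε n * Real.exp 1 / k : ℝ) < Real.exp (n * h) := by
      rw [div_lt_iff₀ hk0]
      have : (ppoN f ε n * Real.exp 1 : ℝ) = Real.exp (n * h) * B := by
        rw [hB, ← Real.exp_add]
        conv_lhs => rw [← Real.exp_log hV, ← Real.exp_add]
        congr 1; ring
      rw [this]
      exact mul_lt_mul_of_pos_left hkB (Real.exp_pos _)
    have h6 : (ppoN f ε n * Real.exp 1 / k : ℝ) ^ k < Real.exp (h * (n * k)) := by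
      have : Real.exp (h * (n * k)) = Real.exp (n * h) ^ k := by
        rw [← Real.exp_nat_mul]; congr 1; ring
      rw [this]
      exact pow_lt_pow_left₀ h5 (by positivity) (by omega)
    have : ((ppoN f ε n).choose k : ℝ) < ppoN f ε (n * k) := by linarith
    exact_mod_cast this
  obtain ⟨L, hL, hppo⟩ := ppo_exists f hε hn hlt
  refine ⟨(L + 1) * n, by positivity, hppo, ?_⟩
  have hLk : ((L + 1 : ℕ) : ℝ) ≤ k := by exact_mod_cast hL
  push_cast at hLk ⊢
  rw [mul_comm]
  exact mul_le_mul_of_nonneg_left (hLk.trans hkB') (Nat.cast_nonneg _)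

/-- **Lemma A.10** of Bochi–Garibaldi, "Extremal Norms for Fiber-Bunched Cocycles":
for an expansive homeomorphism `f` of a compact metric space and every sufficiently
small `ε > 0`, the minimal period `R(ε, ρ_{n,f}, f)` of a periodic pseudoorbit is finite
for each `n ≥ 1`, and `(1/n)·log R(ε, ρ_{n,f}, f) → 0` as `n → ∞`. -/
theorem subexponential_pseudoorbit_period {Y : Type*} [MetricSpace Y] [CompactSpace Y]
    [Nonempty Y] (f : Y ≃ₜ Y)
    (hexp : ∃ c > (0 : ℝ), ∀ x y : Y, x ≠ y →
      ∃ n : ℤ, c < dist (zIter f n x) (zIter f n y)) :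
    ∃ ε₀ > (0 : ℝ), ∀ ε : ℝ, 0 < ε → ε ≤ ε₀ →
      (∀ n : ℕ, 1 ≤ n →
        {k : ℕ | 0 < k ∧ HasPPO (f : Y → Y) (dIter (f : Y → Y) n) ε k}.Nonempty) ∧
      Filter.Tendsto
        (fun n : ℕ =>
          Real.log (minPPOPeriod (f : Y → Y) (dIter (f : Y → Y) n) ε) / (n : ℝ))
        Filter.atTop (nhds 0) := by
  refine ⟨1, one_pos, fun ε hε _ => ⟨fun n hn => ?_, ?_⟩⟩
  · obtain ⟨M, hM, hp, -⟩ := ppo_bound (f : Y → Y) hε hn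
    exact ⟨M, hM, hp⟩
  set h := (ppoN_subadd (f : Y → Y) hε).lim with hh
  have hlim := (ppoN_subadd (f : Y → Y) hε).tendsto_lim (ppo_bdd (f : Y → Y) ε)
  have hlog : Filter.Tendsto (fun n : ℕ => Real.log n / (n : ℝ)) Filter.atTop (nhds 0) :=
    (Real.isLittleO_log_id_atTop.tendsto_div_nhds_zero).comp tendsto_natCast_atTop_atTop
  have hconst : Filter.Tendsto (fun n : ℕ => (Real.log 2 + 1) / (n : ℝ)) Filter.atTop (nhds 0) :=
    tendsto_const_div_atTop_nhds_zero_nat _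
  have hup : Filter.Tendsto (fun n : ℕ => Real.log n / (n : ℝ) + (Real.log 2 + 1) / (n : ℝ) +
      (Real.log (ppoN (f : Y → Y) ε n) / n - h)) Filter.atTop (nhds 0) := by
    have := (hlog.add hconst).add (hlim.sub_const h)
    simpa [hh] using this
  refine squeeze_zero' (Filter.Eventually.of_forall fun n =>
    div_nonneg (Real.log_natCast_nonneg _) (Nat.cast_nonneg _)) ?_ hup
  filter_upwards [Filter.eventually_ge_atTop 1] with n hn
  obtain ⟨M, hM, hp, hb⟩ := ppo_bound (f : Y → Y) hε hn
  have hmem : 0 < minPPOPeriod (f : Y → Y) (dIter (f : Y → Y) n) ε :=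
    (Nat.sInf_mem (s := {k : ℕ | 0 < k ∧ HasPPO (f : Y → Y) (dIter (f : Y → Y) n) ε k})
      ⟨M, hM, hp⟩).1
  have hR : minPPOPeriod (f : Y → Y) (dIter (f : Y → Y) n) ε ≤ M := Nat.sInf_le ⟨hM, hp⟩
  have hn0 : (0 : ℝ) < n := by exact_mod_cast hn
  have h1 : Real.log (minPPOPeriod (f : Y → Y) (dIter (f : Y → Y) n) ε) ≤
      Real.log n + (Real.log 2 + (Real.log (ppoN (f : Y → Y) ε n) - n * h + 1)) := by
    have hR' : (minPPOPeriod (f : Y → Y) (dIter (f : Y → Y) n) ε : ℝ) ≤ M := by exact_mod_cast hR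
    refine (Real.log_le_log (by exact_mod_cast hmem) (hR'.trans hb)).trans (le_of_eq ?_)
    rw [Real.log_mul hn0.ne' (by positivity), Real.log_mul (by norm_num) (Real.exp_pos _).ne',
      Real.log_exp]
  rw [div_le_iff₀ hn0]
  refine h1.trans (le_of_eq ?_)
  field_simp
  ring
end

section
/- Let T be a hyperbolic homeomorphism of a compact metric space (X,d), and let Y ⊆ X be a nonempty compact T-invariant set. Then for every τ > 0 and every sufficiently large integer n, there exists a periodic orbit of T of period at most n entirely contained in the n^{-τ}-neighborhood of Y; that is, there exist p ∈ X and an integer k with 1 ≤ k ≤ n such that T^k p = p and dist(T^j p, Y) ≤ n^{-τ} for every j ∈ ℤ. (Theorem 7.4 of the paper, the Bressaud–Quas Closing Lemma for hyperbolic homeomorphisms.) -/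
/-! ### Combinatorial part (Bressaud–Quas counting) -/

theorem bq_closed_walk {V : Type*} (R : V → V → Prop) {k : ℕ} (u : Fin k → V)
    (hu : ∀ i (h : i + 1 < k), R (u ⟨i, by omega⟩) (u ⟨i + 1, h⟩))
    (i j : ℕ) (hij : i ≤ j) (hj : j < k) (hR : R (u ⟨j, hj⟩) (u ⟨i, by omega⟩)) :
    ∃ c, 1 ≤ c ∧ c ≤ k ∧ ∃ a : ℕ → V, (∀ i, R (a i) (a (i + 1))) ∧ ∀ i, a (i + c) = a i := by
  have hlt : ∀ t, t % (j - i + 1) < j - i + 1 := fun t => Nat.mod_lt _ (by omega)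
  refine ⟨j - i + 1, by omega, by omega,
    fun t => u ⟨i + t % (j - i + 1), by have := hlt t; omega⟩, ?_, ?_⟩
  · intro t
    have h1 := hlt t
    rcases Nat.lt_or_ge (t % (j - i + 1) + 1) (j - i + 1) with h | h
    · have h2 : (t + 1) % (j - i + 1) = t % (j - i + 1) + 1 := by
        rw [← Nat.mod_add_mod, Nat.mod_eq_of_lt h]
      have := hu (i + t % (j - i + 1)) (by omega)
      simp only [h2]
      exact this
    · have h3 : t % (j - i + 1) + 1 = j - i + 1 := by omega
      have h2 : (t + 1) % (j - i + 1) = 0 := by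
        rw [← Nat.mod_add_mod, h3, Nat.mod_self]
      have h4 : i + t % (j - i + 1) = j := by omega
      simp only [h2, h4, Nat.add_zero]
      exact hR
  · intro t
    simp only [Nat.add_mod_right]

theorem bq_cycle {V : Type*} [DecidableEq V] (R : V → V → Prop) (S : Finset V) (n : ℕ)
    (P : Finset (Fin (n + 1) → V))
    (hS : ∀ u ∈ P, ∀ i, u i ∈ S)
    (hP : ∀ u ∈ P, ∀ i (h : i + 1 < n + 1), R (u ⟨i, by omega⟩) (u ⟨i + 1, h⟩))
    (hcard : S.card.choose (n + 1) < P.card) :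
    ∃ c, 1 ≤ c ∧ c ≤ n + 1 ∧
      ∃ a : ℕ → V, (∀ i, R (a i) (a (i + 1))) ∧ ∀ i, a (i + c) = a i := by
  by_contra H
  have hno : ∀ u ∈ P, ∀ i j : ℕ, ∀ hij : i ≤ j, ∀ hj : j < n + 1,
      ¬ R (u ⟨j, hj⟩) (u ⟨i, by omega⟩) :=
    fun u hu i j hij hj hR => H (bq_closed_walk R u (hP u hu) i j hij hj hR)
  have hlt : ∀ u ∈ P, ∀ i j : Fin (n + 1), i < j → u i ≠ u j := by
    rintro u hu ⟨i, hi⟩ ⟨j, hj⟩ hij he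
    have hij' : i < j := hij
    have h1 := hP u hu (j - 1) (by omega)
    have h2 : (⟨j - 1 + 1, by omega⟩ : Fin (n + 1)) = ⟨j, hj⟩ := by
      apply Fin.ext; simp; omega
    rw [h2, ← he] at h1
    exact hno u hu i (j - 1) (by omega) (by omega) h1
  have hinj : ∀ u ∈ P, Function.Injective u := by
    intro u hu i j he
    rcases lt_trichotomy i j with h | h | h
    · exact absurd he (hlt u hu i j h)
    · exact h
    · exact absurd he.symm (hlt u hu j i h)
  have hle : P.card ≤ (S.powersetCard (n + 1)).card := by
    apply Finset.card_le_card_of_injOn (fun u => Finset.univ.image u)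
    · intro u hu
      have hu' : u ∈ P := hu
      simp only [Finset.mem_coe, Finset.mem_powersetCard]
      constructor
      · intro v hv
        obtain ⟨i, -, rfl⟩ := Finset.mem_image.1 hv
        exact hS u hu' i
      · rw [Finset.card_image_of_injective _ (hinj u hu')]
        simp
    · intro u hu v hv he
      have hu' : u ∈ P := hu
      have hv' : v ∈ P := hv
      have he' : Finset.univ.image u = Finset.univ.image v := he
      have hex : ∀ i, ∃ j, u j = v i := by
        intro i
        have : v i ∈ Finset.univ.image u := by rw [he']; simp
        obtain ⟨j, -, hj⟩ := Finset.mem_image.1 this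
        exact ⟨j, hj⟩
      choose π hπ using hex
      have hmono : StrictMono π := by
        rw [Fin.strictMono_iff_lt_succ]
        intro i
        by_contra hcon
        have hcon' : π i.succ ≤ π i.castSucc := not_lt.1 hcon
        have h1 := hP v hv' i.1 (by omega)
        have e1 : (⟨i.1, by omega⟩ : Fin (n + 1)) = i.castSucc := rfl
        have e2 : (⟨i.1 + 1, by omega⟩ : Fin (n + 1)) = i.succ := rfl
        rw [e1, e2, ← hπ, ← hπ] at h1
        exact hno u hu' (π i.succ).1 (π i.castSucc).1 hcon' (π i.castSucc).2 h1
      have hsurj : Function.Surjective π := Finite.injective_iff_surjective.1 hmono.injective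
      have hid : π = id := (StrictMono.range_inj hmono strictMono_id).1
        (by rw [hsurj.range_eq, Set.range_id])
      funext i
      rw [← hπ i, hid]; rfl
  rw [Finset.card_powersetCard] at hle
  omega

/-- numeric bound for binomials. -/
theorem bq_choose_lt (M k : ℕ) (hk : 1 ≤ k) (b : ℝ) (hb : 0 < b)
    (h : Real.exp 1 * M < k * b) : ((M.choose k : ℕ) : ℝ) < b ^ k := by
  have h1 : ((M.choose k : ℕ) : ℝ) ≤ (M : ℝ) ^ k / (k.factorial : ℝ) := Nat.choose_le_pow_div k M
  have h2 : (k : ℝ) ^ k / (k.factorial : ℝ) ≤ Real.exp k :=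
    Real.pow_div_factorial_le_exp (k : ℝ) (by positivity) k
  have hf : (0 : ℝ) < k.factorial := by positivity
  have hk0 : (0 : ℝ) < k := by exact_mod_cast hk
  have h3 : (Real.exp 1 * M) ^ k < (k * b) ^ k :=
    pow_lt_pow_left₀ h (by positivity) (by omega)
  rw [mul_pow, mul_pow, ← Real.exp_nat_mul, mul_one] at h3
  refine lt_of_le_of_lt h1 ?_
  rw [div_lt_iff₀ hf]
  rw [div_le_iff₀ hf] at h2
  have hbk : 0 < b ^ k := by positivity
  have : Real.exp k * (M : ℝ) ^ k < Real.exp k * (b ^ k * k.factorial) := by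
    calc _ < _ := h3
      _ ≤ (Real.exp k * k.factorial) * b ^ k := by gcongr
      _ = _ := by ring
  exact lt_of_mul_lt_mul_left this (Real.exp_pos _).le

/-! ### Hyperbolic part -/

theorem bq_contract {X : Type*} [MetricSpace X] (f : X → X) (ε θ : ℝ) (hθ : 0 ≤ θ)
    (h : ∀ x y, (∀ n : ℕ, dist (f^[n] y) (f^[n] x) ≤ ε) → dist (f y) (f x) ≤ θ * dist y x)
    (x y : X) (hxy : ∀ n : ℕ, dist (f^[n] y) (f^[n] x) ≤ ε) (n : ℕ) :
    dist (f^[n] y) (f^[n] x) ≤ θ ^ n * dist y x := by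
  induction n with
  | zero => simp
  | succ n ih =>
    rw [Function.iterate_succ_apply', Function.iterate_succ_apply']
    refine (h _ _ ?_).trans ?_
    · intro m
      rw [← Function.iterate_add_apply, ← Function.iterate_add_apply]
      exact hxy _
    · calc _ ≤ θ * (θ ^ n * dist y x) := by gcongr
        _ = _ := by ring

/-- Uniform contraction data. -/
structure BQUnif {X : Type*} [MetricSpace X] (T : X ≃ₜ X) (ε₀ ε₁ C₀ θ K : ℝ)
    (br : X → X → X) : Prop where
  eps0 : 0 < ε₀
  eps1 : 0 < ε₁
  C0 : 0 < C₀
  th0 : 0 < θ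
  th1 : θ < 1
  K0 : 0 < K
  lip : ∀ x y, dist (T x) (T y) ≤ K * dist x y
  lip' : ∀ x y, dist (T.symm x) (T.symm y) ≤ K * dist x y
  cs : ∀ x y, y ∈ locStable T ε₀ x → ∀ n : ℕ,
    dist ((T : X → X)^[n] y) ((T : X → X)^[n] x) ≤ θ ^ n * dist y x
  cu : ∀ x y, y ∈ locUnstable T ε₀ x → ∀ n : ℕ,
    dist ((T.symm : X → X)^[n] y) ((T.symm : X → X)^[n] x) ≤ θ ^ n * dist y x
  bu : ∀ x y, dist x y ≤ 2 * ε₁ → br x y ∈ locUnstable T ε₀ x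
  bs : ∀ x y, dist x y ≤ 2 * ε₁ → br x y ∈ locStable T ε₀ y
  buniq : ∀ x y w, dist x y ≤ 2 * ε₁ → w ∈ locUnstable T ε₀ x → w ∈ locStable T ε₀ y →
    w = br x y
  bd1 : ∀ x y, dist x y ≤ 2 * ε₁ → dist (br x y) x ≤ C₀ * dist x y
  bd2 : ∀ x y, dist x y ≤ 2 * ε₁ → dist (br x y) y ≤ C₀ * dist x y

theorem bq_unif {X : Type*} [MetricSpace X] [CompactSpace X] [Nonempty X]
    (T : X ≃ₜ X) (ε₀ ε₁ : ℝ) (lu ls : X → ℝ) (br : X → X → X) (C₀ : ℝ)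
    (hT : HypHomeo T ε₀ ε₁ lu ls br C₀) : ∃ θ K, BQUnif T ε₀ ε₁ C₀ θ K br := by
  obtain ⟨K1, hK1⟩ := hT.lipschitz_T
  obtain ⟨K2, hK2⟩ := hT.lipschitz_Tinv
  obtain ⟨a, -, ha⟩ := isCompact_univ.exists_isMinOn (Set.univ_nonempty (α := X))
    hT.cont_lu.continuousOn
  obtain ⟨b, -, hb⟩ := isCompact_univ.exists_isMinOn (Set.univ_nonempty (α := X))
    hT.cont_ls.continuousOn
  have ha' : ∀ x, lu a ≤ lu x := fun x => ha (Set.mem_univ x)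
  have hb' : ∀ x, ls b ≤ ls x := fun x => hb (Set.mem_univ x)
  set lam := min (lu a) (ls b) with hlam
  have hlam0 : 0 < lam := lt_min (hT.pos_lu a) (hT.pos_ls b)
  have hself_s : ∀ x, x ∈ locStable T ε₀ x := fun x n => by simp [hT.eps0_pos.le]
  have hself_u : ∀ x, x ∈ locUnstable T ε₀ x := fun x n => by simp [hT.eps0_pos.le]
  have hmem : ∀ x y, dist x y ≤ 2 * ε₁ → br x y ∈ locUnstable T ε₀ x ∩ locStable T ε₀ y := by
    intro x y h
    rw [hT.bracket_spec x y h]; rfl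
  refine ⟨Real.exp (-lam), (K1 : ℝ) + K2 + 1, hT.eps0_pos, hT.eps1_pos, hT.C0_pos,
    Real.exp_pos _, by simpa using hlam0, by positivity, ?_, ?_, ?_, ?_, ?_, ?_, ?_, ?_, ?_⟩
  · intro x y
    refine (hK1.dist_le_mul x y).trans ?_
    gcongr
    have := K2.2
    simp only [NNReal.val_eq_coe] at this
    linarith
  · intro x y
    refine (hK2.dist_le_mul x y).trans ?_
    gcongr
    have := K1.2
    simp only [NNReal.val_eq_coe] at this
    linarith
  · intro x y hxy
    refine bq_contract _ ε₀ _ (Real.exp_pos _).le ?_ x y hxy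
    intro x y h
    refine (hT.contract_s x y x h (hself_s x)).trans ?_
    gcongr
    exact (min_le_right _ _).trans (hb' x)
  · intro x y hxy
    refine bq_contract _ ε₀ _ (Real.exp_pos _).le ?_ x y hxy
    intro x y h
    refine (hT.contract_u x y x h (hself_u x)).trans ?_
    gcongr
    exact (min_le_left _ _).trans (ha' x)
  · exact fun x y h => (hmem x y h).1
  · exact fun x y h => (hmem x y h).2
  · intro x y w h h1 h2
    have : w ∈ locUnstable T ε₀ x ∩ locStable T ε₀ y := ⟨h1, h2⟩
    rw [hT.bracket_spec x y h] at this
    exact this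
  · exact fun x y h => (le_max_left _ _).trans (hT.bracket_bound x y h)
  · exact fun x y h => (le_max_right _ _).trans (hT.bracket_bound x y h)

section Hyp

variable {X : Type*} [MetricSpace X] {T : X ≃ₜ X} {ε₀ ε₁ C₀ θ K : ℝ} {br : X → X → X}

theorem bq_fwd_u (w x : X) (h : w ∈ locUnstable T ε₀ x) (h1 : dist (T w) (T x) ≤ ε₀) :
    T w ∈ locUnstable T ε₀ (T x) := by
  intro n
  cases n with
  | zero => simpa using h1
  | succ n => simpa [Function.iterate_succ_apply] using h n

theorem bq_fwd_s (w x : X) (h : w ∈ locStable T ε₀ x) : T w ∈ locStable T ε₀ (T x) := by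
  intro n
  have := h (n + 1)
  simpa [Function.iterate_succ_apply] using this

theorem bq_bwd_s (w x : X) (h : w ∈ locStable T ε₀ x) (h1 : dist (T.symm w) (T.symm x) ≤ ε₀) :
    T.symm w ∈ locStable T ε₀ (T.symm x) := by
  intro n
  cases n with
  | zero => simpa using h1
  | succ n => simpa [Function.iterate_succ_apply] using h n

theorem bq_bwd_u (w x : X) (h : w ∈ locUnstable T ε₀ x) :
    T.symm w ∈ locUnstable T ε₀ (T.symm x) := by
  intro n
  have := h (n + 1)
  simpa [Function.iterate_succ_apply] using this

theorem bq_expansive (H : BQUnif T ε₀ ε₁ C₀ θ K br) (ε : ℝ) (hε1 : ε ≤ 2 * ε₁)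
    (hεK : K * (C₀ * ε) ≤ ε₀) (m : ℕ) (x y : X)
    (hf : ∀ j ≤ m, dist ((T : X → X)^[j] x) ((T : X → X)^[j] y) ≤ ε)
    (hb : ∀ j ≤ m, dist ((T.symm : X → X)^[j] x) ((T.symm : X → X)^[j] y) ≤ ε) :
    dist x y ≤ 2 * C₀ * ε * θ ^ m := by
  have hC := H.C0
  have hK := H.K0
  have hth := H.th0
  have fw : ∀ j ≤ m, (T : X → X)^[j] (br x y) = br ((T : X → X)^[j] x) ((T : X → X)^[j] y) := by
    intro j
    induction j with
    | zero => intro _; rfl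
    | succ j ih =>
      intro hj
      have hj' := hf j (by omega)
      have hd := hf (j + 1) hj
      simp only [Function.iterate_succ_apply'] at hd ⊢
      rw [ih (by omega)]
      refine H.buniq _ _ _ (hd.trans hε1) ?_ ?_
      · apply bq_fwd_u _ _ (H.bu _ _ (hj'.trans hε1))
        refine (H.lip _ _).trans (le_trans ?_ hεK)
        gcongr
        refine (H.bd1 _ _ (hj'.trans hε1)).trans ?_
        gcongr
      · exact bq_fwd_s _ _ (H.bs _ _ (hj'.trans hε1))
  have bw : ∀ j ≤ m, (T.symm : X → X)^[j] (br x y)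
      = br ((T.symm : X → X)^[j] x) ((T.symm : X → X)^[j] y) := by
    intro j
    induction j with
    | zero => intro _; rfl
    | succ j ih =>
      intro hj
      have hj' := hb j (by omega)
      have hd := hb (j + 1) hj
      simp only [Function.iterate_succ_apply'] at hd ⊢
      rw [ih (by omega)]
      refine H.buniq _ _ _ (hd.trans hε1) ?_ ?_
      · exact bq_bwd_u _ _ (H.bu _ _ (hj'.trans hε1))
      · apply bq_bwd_s _ _ (H.bs _ _ (hj'.trans hε1))
        refine (H.lip' _ _).trans (le_trans ?_ hεK)
        gcongr
        refine (H.bd2 _ _ (hj'.trans hε1)).trans ?_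
        gcongr
  have h1 : dist (br x y) x ≤ θ ^ m * (C₀ * ε) := by
    have hd := hf m le_rfl
    have a1 := H.cu _ _ (H.bu _ _ (hd.trans hε1)) m
    rw [← fw m le_rfl] at a1
    rw [(Function.LeftInverse.iterate T.symm_apply_apply m) (br x y),
      (Function.LeftInverse.iterate T.symm_apply_apply m) x] at a1
    refine a1.trans ?_
    gcongr
    rw [fw m le_rfl]
    refine (H.bd1 _ _ (hd.trans hε1)).trans ?_
    gcongr
  have h2 : dist (br x y) y ≤ θ ^ m * (C₀ * ε) := by
    have hd := hb m le_rfl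
    have a1 := H.cs _ _ (H.bs _ _ (hd.trans hε1)) m
    rw [← bw m le_rfl] at a1
    rw [(Function.LeftInverse.iterate T.apply_symm_apply m) (br x y),
      (Function.LeftInverse.iterate T.apply_symm_apply m) y] at a1
    refine a1.trans ?_
    gcongr
    rw [bw m le_rfl]
    refine (H.bd2 _ _ (hd.trans hε1)).trans ?_
    gcongr
  have := dist_triangle_left x y (br x y)
  linarith

theorem bq_iter_symm (T : X ≃ₜ X) (j a : ℕ) (h : j ≤ a) (z : X) :
    (T : X → X)^[j] ((T.symm : X → X)^[a] z) = (T.symm : X → X)^[a - j] z := by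
  obtain ⟨b, rfl⟩ := Nat.exists_eq_add_of_le h
  rw [Function.iterate_add_apply, (Function.LeftInverse.iterate T.apply_symm_apply j)]
  simp

theorem bq_iter_symm' (T : X ≃ₜ X) (j a : ℕ) (h : a ≤ j) (z : X) :
    (T : X → X)^[j] ((T.symm : X → X)^[a] z) = (T : X → X)^[j - a] z := by
  obtain ⟨b, rfl⟩ := Nat.exists_eq_add_of_le' h
  rw [Function.iterate_add_apply, (Function.LeftInverse.iterate T.apply_symm_apply a)]
  simp

theorem bq_shadow [CompleteSpace X] (H : BQUnif T ε₀ ε₁ C₀ θ K br) (L : ℕ)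
    (hL : C₀ * θ ^ L ≤ 1 / 2) (hL2 : θ ^ L ≤ 1 / 2) (δ : ℝ) (hδ0 : 0 ≤ δ) (hδ : δ ≤ ε₁)
    (x : ℕ → X) (hx : ∀ k, dist ((T : X → X)^[L] (x k)) (x (k + 1)) ≤ δ) :
    ∃ q, ∀ k, ∀ i < L, dist ((T : X → X)^[L * k + i] q) ((T : X → X)^[i] (x k)) ≤ 6 * C₀ * δ := by
  have hC := H.C0
  have hth := H.th0
  have hth1 := H.th1
  have he1 := H.eps1
  let z : ℕ → X := fun k => Nat.rec (x 0) (fun k zk => br ((T : X → X)^[L] zk) (x (k + 1))) k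
  have z0 : z 0 = x 0 := rfl
  have zs : ∀ k, z (k + 1) = br ((T : X → X)^[L] (z k)) (x (k + 1)) := fun k => rfl
  have hr0 : 0 ≤ C₀ * δ := by positivity
  -- main induction
  have hz : ∀ k, z k ∈ locStable T ε₀ (x k) ∧ dist (z k) (x k) ≤ 2 * C₀ * δ ∧
      dist ((T : X → X)^[L] (z k)) (x (k + 1)) ≤ 2 * δ := by
    have aux : ∀ k, z k ∈ locStable T ε₀ (x k) → dist (z k) (x k) ≤ 2 * C₀ * δ →
        dist ((T : X → X)^[L] (z k)) (x (k + 1)) ≤ 2 * δ := by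
      intro k h1 h2
      have h3 := H.cs _ _ h1 L
      have h4 : θ ^ L * dist (z k) (x k) ≤ θ ^ L * (2 * C₀ * δ) := by gcongr
      have h5 : (C₀ * θ ^ L) * δ ≤ 1 / 2 * δ := by gcongr
      have h6 := dist_triangle ((T : X → X)^[L] (z k)) ((T : X → X)^[L] (x k)) (x (k + 1))
      have h7 := hx k
      nlinarith
    intro k
    induction k with
    | zero =>
      have a1 : z 0 ∈ locStable T ε₀ (x 0) := by
        intro n; rw [z0]; simp [H.eps0.le]
      have a2 : dist (z 0) (x 0) ≤ 2 * C₀ * δ := by rw [z0]; simp; nlinarith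
      exact ⟨a1, a2, aux 0 a1 a2⟩
    | succ k ih =>
      obtain ⟨-, -, h3⟩ := ih
      have h4 : dist ((T : X → X)^[L] (z k)) (x (k + 1)) ≤ 2 * ε₁ := by linarith
      have a1 : z (k + 1) ∈ locStable T ε₀ (x (k + 1)) := by
        rw [zs]; exact H.bs _ _ h4
      have a2 : dist (z (k + 1)) (x (k + 1)) ≤ 2 * C₀ * δ := by
        rw [zs]
        refine (H.bd2 _ _ h4).trans ?_
        have : C₀ * dist ((T : X → X)^[L] (z k)) (x (k + 1)) ≤ C₀ * (2 * δ) := by gcongr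
        linarith
      exact ⟨a1, a2, aux _ a1 a2⟩
  let q : ℕ → X := fun m => (T.symm : X → X)^[L * m] (z m)
  have hq : ∀ k i s, i < L → dist ((T : X → X)^[L * k + i] (q (k + s)))
      ((T : X → X)^[L * k + i] (q (k + s + 1))) ≤ (2 * C₀ * δ) * (θ ^ L) ^ s := by
    intro k i s hi
    have h4 : dist ((T : X → X)^[L] (z (k + s))) (x (k + s + 1)) ≤ 2 * ε₁ := by
      have := (hz (k + s)).2.2; linarith
    have hu := H.bu _ _ h4
    have hb : dist (br ((T : X → X)^[L] (z (k + s))) (x (k + s + 1))) ((T : X → X)^[L] (z (k + s)))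
        ≤ 2 * C₀ * δ := by
      refine (H.bd1 _ _ h4).trans ?_
      have : C₀ * dist ((T : X → X)^[L] (z (k + s))) (x (k + s + 1)) ≤ C₀ * (2 * δ) := by
        gcongr; exact (hz (k + s)).2.2
      linarith
    have hc := H.cu _ _ hu (L * s + (L - i))
    rw [← zs] at hc hb
    have e0 : L * (k + s + 1) = L * k + L * s + L := by ring
    have e1 : (T : X → X)^[L * k + i] (q (k + s + 1))
        = (T.symm : X → X)^[L * s + (L - i)] (z (k + s + 1)) := by
      simp only [q]
      rw [bq_iter_symm _ _ _ (by omega)]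
      congr 2
      omega
    have e2 : (T : X → X)^[L * k + i] (q (k + s))
        = (T.symm : X → X)^[L * s + (L - i)] ((T : X → X)^[L] (z (k + s))) := by
      simp only [q]
      have : (T.symm : X → X)^[L * (k + s)] (z (k + s))
          = (T.symm : X → X)^[L * (k + s) + L] ((T : X → X)^[L] (z (k + s))) := by
        rw [Function.iterate_add_apply, (Function.LeftInverse.iterate T.symm_apply_apply L)]
      have e3 : L * (k + s) = L * k + L * s := by ring
      rw [this, bq_iter_symm _ _ _ (by omega)]
      congr 2
      omega
    rw [e1, e2, dist_comm]
    refine hc.trans ?_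
    have h5 : θ ^ (L * s + (L - i)) ≤ (θ ^ L) ^ s := by
      rw [← pow_mul]
      exact pow_le_pow_of_le_one hth.le hth1.le (by omega)
    calc _ ≤ (θ ^ L) ^ s * (2 * C₀ * δ) := by gcongr
      _ = _ := by ring
  rcases Nat.eq_zero_or_pos L with hL0 | hLpos
  · exact ⟨x 0, fun k i hi => by omega⟩
  have hθL : θ ^ L < 1 := by linarith
  have hcau : CauchySeq q := by
    refine cauchySeq_of_le_geometric (θ ^ L) (2 * C₀ * δ) hθL ?_
    intro s
    have := hq 0 0 s hLpos
    simpa using this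
  obtain ⟨p, hp⟩ := cauchySeq_tendsto_of_complete hcau
  refine ⟨p, fun k i hi => ?_⟩
  have hcont : Continuous ((T : X → X)^[L * k + i]) := T.continuous.iterate _
  have ht : Filter.Tendsto (fun s => (T : X → X)^[L * k + i] (q (k + s))) Filter.atTop
      (nhds ((T : X → X)^[L * k + i] p)) := by
    refine (hcont.tendsto p).comp (hp.comp ?_)
    exact Filter.tendsto_atTop_mono (fun s => Nat.le_add_left s k) Filter.tendsto_id
  have h1 := dist_le_of_le_geometric_of_tendsto₀ (θ ^ L) (2 * C₀ * δ) hθL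
    (fun s => hq k i s hi) ht
  have h2 : (T : X → X)^[L * k + i] (q (k + 0)) = (T : X → X)^[i] (z k) := by
    simp only [q, Nat.add_zero]
    rw [bq_iter_symm' _ _ _ (by omega)]
    congr 2
    omega
  rw [h2] at h1
  have h3 := H.cs _ _ (hz k).1 i
  have h4 : θ ^ i * dist (z k) (x k) ≤ 1 * (2 * C₀ * δ) := by
    gcongr
    · exact pow_le_one₀ hth.le hth1.le
    · exact (hz k).2.1
  have h5 : 2 * C₀ * δ / (1 - θ ^ L) ≤ 4 * C₀ * δ := by
    rw [div_le_iff₀ (by linarith)]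
    nlinarith
  have h6 := dist_triangle_left ((T : X → X)^[L * k + i] p) ((T : X → X)^[i] (x k))
    ((T : X → X)^[i] (z k))
  linarith

theorem bq_closing [CompleteSpace X] (H : BQUnif T ε₀ ε₁ C₀ θ K br) (L : ℕ) (hLpos : 0 < L)
    (hL : C₀ * θ ^ L ≤ 1 / 2) (hL2 : θ ^ L ≤ 1 / 2) (δ : ℝ) (hδ0 : 0 ≤ δ) (hδ : δ ≤ ε₁)
    (hδ2 : 12 * C₀ * δ ≤ ε₀)
    (x : ℕ → X) (hx : ∀ k, dist ((T : X → X)^[L] (x k)) (x (k + 1)) ≤ δ)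
    (c : ℕ) (hc : 1 ≤ c) (hper : ∀ k, x (k + c) = x k) :
    ∃ p, (T : X → X)^[L * c] p = p ∧
      ∀ k, ∀ i < L, dist ((T : X → X)^[L * k + i] p) ((T : X → X)^[i] (x k)) ≤ 6 * C₀ * δ := by
  have hth := H.th0
  have hth1 := H.th1
  obtain ⟨q, hq⟩ := bq_shadow H L hL hL2 δ hδ0 hδ x hx
  have hper' : ∀ s k, x (k + c * s) = x k := by
    intro s
    induction s with
    | zero => simp
    | succ s ih => intro k; rw [Nat.mul_succ, ← Nat.add_assoc, hper, ih]
  have hst : (T : X → X)^[L * c] q ∈ locStable T ε₀ q := by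
    intro j
    have hj : j = L * (j / L) + j % L := (Nat.div_add_mod j L).symm
    have hm := Nat.mod_lt j hLpos
    have h1 := hq (j / L) (j % L) hm
    have h2 := hq (j / L + c) (j % L) hm
    rw [hper] at h2
    rw [← hj] at h1
    have e : L * (j / L + c) + j % L = j + L * c := by rw [Nat.mul_add]; omega
    rw [e] at h2
    rw [← Function.iterate_add_apply]
    have := dist_triangle_right ((T : X → X)^[j + L * c] q) ((T : X → X)^[j] q)
      ((T : X → X)^[j % L] (x (j / L)))
    linarith
  let g : ℕ → X := fun s => (T : X → X)^[L * c * s] q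
  have hN : 0 < L * c := Nat.mul_pos hLpos hc
  have hθN : θ ^ (L * c) < 1 := pow_lt_one₀ hth.le hth1 (by omega)
  have hcau : CauchySeq g := by
    refine cauchySeq_of_le_geometric (θ ^ (L * c)) (dist ((T : X → X)^[L * c] q) q) hθN ?_
    intro s
    have h1 := H.cs _ _ hst (L * c * s)
    rw [← Function.iterate_add_apply, pow_mul] at h1
    rw [dist_comm, mul_comm]
    simpa only [g, Nat.mul_succ] using h1
  obtain ⟨p, hp⟩ := cauchySeq_tendsto_of_complete hcau
  refine ⟨p, ?_, ?_⟩
  · have hcont : Continuous ((T : X → X)^[L * c]) := T.continuous.iterate _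
    have h1 := (hcont.tendsto p).comp hp
    have h2 := hp.comp (Filter.tendsto_add_atTop_nat 1)
    refine tendsto_nhds_unique h1 (h2.congr ?_)
    intro s
    simp only [g, Function.comp]
    rw [← Function.iterate_add_apply]
    congr 2
    ring
  · intro k i hi
    have hcont : Continuous ((T : X → X)^[L * k + i]) := T.continuous.iterate _
    have h1 := ((hcont.tendsto p).comp hp).dist
      (tendsto_const_nhds (x := (T : X → X)^[i] (x k)))
    refine le_of_tendsto h1 (Filter.Eventually.of_forall ?_)
    intro s
    have h2 := hq (k + c * s) i hi
    rw [hper'] at h2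
    simp only [g, Function.comp]
    rw [← Function.iterate_add_apply]
    have e : L * k + i + L * c * s = L * (k + c * s) + i := by ring
    rw [e]
    exact h2

end Hyp

/-! ### Coding and entropy -/

section Coding

open Classical in
/-- The words of length `N` of the coded system. -/
noncomputable def bqW {X ι : Type*} [Finite ι] (f : X → X) (code : X → ι) (Y : Set X) (N : ℕ) :
    Finset (Fin N → ι) :=
  (Set.toFinite ((fun y (i : Fin N) => code (f^[i] y)) '' Y)).toFinset

theorem bqW_mem {X ι : Type*} [Finite ι] (f : X → X) (code : X → ι) (Y : Set X) (N : ℕ)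
    (w : Fin N → ι) :
    w ∈ bqW f code Y N ↔ ∃ y ∈ Y, (fun i : Fin N => code (f^[i] y)) = w := by
  simp [bqW]

theorem bq_mapsTo_iter {X : Type*} (f : X → X) (Y : Set X) (hY : ∀ y ∈ Y, f y ∈ Y) (n : ℕ)
    (y : X) (hy : y ∈ Y) : f^[n] y ∈ Y := by
  induction n with
  | zero => exact hy
  | succ n ih => rw [Function.iterate_succ_apply']; exact hY _ ih

theorem bqW_pos {X ι : Type*} [Finite ι] (f : X → X) (code : X → ι) (Y : Set X)
    (hne : Y.Nonempty) (N : ℕ) : 0 < (bqW f code Y N).card := by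
  obtain ⟨y, hy⟩ := hne
  exact Finset.card_pos.2 ⟨_, (bqW_mem f code Y N _).2 ⟨y, hy, rfl⟩⟩

theorem bqW_mul {X ι : Type*} [Finite ι] (f : X → X) (code : X → ι) (Y : Set X)
    (hY : ∀ y ∈ Y, f y ∈ Y) (m n : ℕ) :
    (bqW f code Y (m + n)).card ≤ (bqW f code Y m).card * (bqW f code Y n).card := by
  rw [← Finset.card_product]
  apply Finset.card_le_card_of_injOn
    (fun w => (fun i => w (Fin.castAdd n i), fun i => w (Fin.natAdd m i)))
  · intro w hw
    obtain ⟨y, hy, rfl⟩ := (bqW_mem f code Y _ _).1 hw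
    simp only [Finset.mem_coe, Finset.mem_product, bqW_mem]
    refine ⟨⟨y, hy, rfl⟩, ⟨f^[m] y, bq_mapsTo_iter f Y hY m y hy, ?_⟩⟩
    funext i
    simp only [Fin.val_natAdd]
    rw [← Function.iterate_add_apply, Nat.add_comm]
  · intro w _ v _ he
    simp only [Prod.mk.injEq] at he
    funext i
    refine Fin.addCases (fun i => ?_) (fun i => ?_) i
    · exact congrFun he.1 i
    · exact congrFun he.2 i

theorem bq_words_cycle {X ι : Type*} [Finite ι] (f : X → X) (code : X → ι) (Y : Set X)
    (hne : Y.Nonempty) (hY : ∀ y ∈ Y, f y ∈ Y) (η : ℝ) (hη : 0 < η) :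
    ∃ L0 : ℕ, ∀ L : ℕ, L0 ≤ L → ∃ c : ℕ, 1 ≤ c ∧ (c : ℝ) ≤ 4 * Real.exp (η * L) ∧
      ∃ y : ℕ → X, (∀ i, y i ∈ Y) ∧ (∀ i, y (i + c) = y i) ∧
        ∀ i, ∀ j < L, code (f^[j] (f^[L] (y i))) = code (f^[j] (y (i + 1))) := by
  classical
  let u : ℕ → ℝ := fun N => Real.log ((bqW f code Y N).card : ℝ)
  have hpos : ∀ N, (0 : ℝ) < (bqW f code Y N).card := fun N => by
    exact_mod_cast bqW_pos f code Y hne N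
  have hu0 : ∀ N, 0 ≤ u N := fun N => Real.log_nonneg (by exact_mod_cast bqW_pos f code Y hne N)
  have hsub : Subadditive u := by
    intro m n
    simp only [u]
    rw [← Real.log_mul (hpos m).ne' (hpos n).ne']
    apply Real.log_le_log (hpos _)
    exact_mod_cast bqW_mul f code Y hY m n
  have hbdd : BddBelow (Set.range fun n => u n / n) := by
    refine ⟨0, ?_⟩
    rintro _ ⟨n, rfl⟩
    exact div_nonneg (hu0 n) (by positivity)
  set h := hsub.lim with hh
  have hlow : ∀ N : ℕ, N ≠ 0 → Real.exp (h * N) ≤ (bqW f code Y N).card := by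
    intro N hN
    have h1 := hsub.lim_le_div hbdd hN
    have hN' : (0 : ℝ) < N := by positivity
    rw [← hh, le_div_iff₀ hN'] at h1
    rw [← Real.exp_log (hpos N)]
    exact Real.exp_le_exp.2 h1
  have hev := (hsub.tendsto_lim hbdd).eventually (gt_mem_nhds (show hsub.lim < h + η by linarith))
  obtain ⟨L1, hL1⟩ := Filter.eventually_atTop.1 hev
  refine ⟨L1 + 1, fun L hL => ?_⟩
  have hLpos : (0 : ℝ) < L := by exact_mod_cast (by omega : 0 < L)
  have hup : ((bqW f code Y L).card : ℝ) ≤ Real.exp ((h + η) * L) := by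
    have h1 := hL1 L (by omega)
    rw [div_lt_iff₀ hLpos] at h1
    rw [← Real.exp_log (hpos L)]
    exact Real.exp_le_exp.2 h1.le
  set M := (bqW f code Y L).card with hM
  let n : ℕ := ⌊Real.exp 1 * M * Real.exp (-(h * L))⌋₊
  have hn1 : Real.exp 1 * M * Real.exp (-(h * L)) < ((n + 1 : ℕ) : ℝ) := by
    push_cast; exact Nat.lt_floor_add_one _
  have hn2 : (n : ℝ) ≤ Real.exp 1 * M * Real.exp (-(h * L)) := Nat.floor_le (by positivity)
  have hch : ((M.choose (n + 1) : ℕ) : ℝ) < Real.exp (h * L) ^ (n + 1) := by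
    apply bq_choose_lt M (n + 1) (by omega) _ (Real.exp_pos _)
    have e : Real.exp 1 * M = Real.exp 1 * M * Real.exp (-(h * L)) * Real.exp (h * L) := by
      rw [mul_assoc (Real.exp 1 * M), ← Real.exp_add]; simp
    rw [e]
    exact mul_lt_mul_of_pos_right hn1 (Real.exp_pos _)
  have hnb : ((n + 1 : ℕ) : ℝ) ≤ 4 * Real.exp (η * L) := by
    have h1 : Real.exp 1 * M * Real.exp (-(h * L)) ≤ 3 * Real.exp (η * L) := by
      have e : Real.exp (η * L) = Real.exp ((h + η) * L) * Real.exp (-(h * L)) := by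
        rw [← Real.exp_add]; congr 1; ring
      rw [e, ← mul_assoc]
      gcongr
      exact Real.exp_one_lt_three.le
    have h2 : 1 ≤ Real.exp (η * L) := Real.one_le_exp (by positivity)
    push_cast
    linarith
  let B : X → (Fin L → ι) := fun y i => code (f^[i] y)
  let P : Finset (Fin (n + 1) → (Fin L → ι)) :=
    (Set.toFinite ((fun y (i : Fin (n + 1)) => B (f^[L * i] y)) '' Y)).toFinset
  have hPmem : ∀ w, w ∈ P ↔ ∃ y ∈ Y, (fun (i : Fin (n + 1)) => B (f^[L * i] y)) = w := by
    intro w; simp [P]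
  have hcardP : (bqW f code Y (L * (n + 1))).card ≤ P.card := by
    have hdiv : ∀ t : Fin (L * (n + 1)), t.1 / L < n + 1 := fun t =>
      Nat.div_lt_of_lt_mul t.2
    have hmod : ∀ t : Fin (L * (n + 1)), t.1 % L < L := fun t => Nat.mod_lt _ (by omega)
    apply Finset.card_le_card_of_surjOn
      (fun w (t : Fin (L * (n + 1))) => w ⟨t.1 / L, hdiv t⟩ ⟨t.1 % L, hmod t⟩)
    intro v hv
    obtain ⟨y, hy, rfl⟩ := (bqW_mem f code Y _ _).1 hv
    refine ⟨fun (i : Fin (n + 1)) => B (f^[L * i] y), (hPmem _).2 ⟨y, hy, rfl⟩, ?_⟩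
    funext t
    simp only [B]
    rw [← Function.iterate_add_apply, Nat.mod_add_div]
  have hcard : M.choose (n + 1) < P.card := by
    have h1 := hlow (L * (n + 1)) (Nat.mul_ne_zero (by omega) (by omega))
    have h2 : Real.exp (h * L) ^ (n + 1) = Real.exp (h * (L * (n + 1) : ℕ)) := by
      rw [← Real.exp_nat_mul]; congr 1; push_cast; ring
    rw [h2] at hch
    have h3 := hch.trans_le h1
    have h4 : M.choose (n + 1) < (bqW f code Y (L * (n + 1))).card := by exact_mod_cast h3
    omega
  obtain ⟨c, hc1, hc2, a, ha, hper⟩ := bq_cycle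
    (fun v w => ∃ y ∈ Y, B y = v ∧ B (f^[L] y) = w) (bqW f code Y L) n P
    (by
      intro w hw i
      obtain ⟨y, hy, rfl⟩ := (hPmem w).1 hw
      exact (bqW_mem f code Y _ _).2 ⟨f^[L * i] y, bq_mapsTo_iter f Y hY _ y hy, rfl⟩)
    (by
      intro w hw i hi
      obtain ⟨y, hy, rfl⟩ := (hPmem w).1 hw
      refine ⟨f^[L * i] y, bq_mapsTo_iter f Y hY _ y hy, rfl, ?_⟩
      simp only
      rw [← Function.iterate_add_apply, Nat.mul_succ, Nat.add_comm])
    hcard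
  have hex : ∀ v w : Fin L → ι, ∃ y, (∃ y ∈ Y, B y = v ∧ B (f^[L] y) = w) →
      y ∈ Y ∧ B y = v ∧ B (f^[L] y) = w := by
    intro v w
    by_cases hR : ∃ y ∈ Y, B y = v ∧ B (f^[L] y) = w
    · obtain ⟨y, hy⟩ := hR
      exact ⟨y, fun _ => hy⟩
    · exact ⟨hne.some, fun h => absurd h hR⟩
  choose F hF using hex
  refine ⟨c, hc1, le_trans (by exact_mod_cast hc2) hnb, fun i => F (a i) (a (i + 1)),
    fun i => (hF _ _ (ha i)).1, ?_, ?_⟩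
  · intro i
    have e : i + c + 1 = i + 1 + c := by omega
    simp only [e, hper]
  · intro i j hj
    have h1 := (hF _ _ (ha i)).2.2
    have h2 := (hF _ _ (ha (i + 1))).2.1
    exact congrFun (h1.trans h2.symm) ⟨j, hj⟩

end Coding

theorem bq_code {X : Type*} [MetricSpace X] [CompactSpace X] (ε : ℝ) (hε : 0 < ε) :
    ∃ (t : Set X) (_ : t.Finite) (code : X → t), ∀ x y, code x = code y → dist x y ≤ ε := by
  obtain ⟨t, -, ht, hcov⟩ := finite_cover_balls_of_compact
    (isCompact_univ (X := X)) (half_pos hε)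
  have hex : ∀ x : X, ∃ s : t, dist x s < ε / 2 := by
    intro x
    have := hcov (Set.mem_univ x)
    simp only [Set.mem_iUnion] at this
    obtain ⟨s, hs, hx⟩ := this
    exact ⟨⟨s, hs⟩, hx⟩
  choose code hcode using hex
  refine ⟨t, ht, code, fun x y h => ?_⟩
  have h1 := hcode x
  have h2 := hcode y
  rw [← h] at h2
  have := dist_triangle_right x y (code x : X)
  linarith

theorem bq_core {X : Type*} [MetricSpace X] [CompactSpace X] {T : X ≃ₜ X} {ε₀ ε₁ C₀ θ K : ℝ}
    {br : X → X → X} (H : BQUnif T ε₀ ε₁ C₀ θ K br) (Y : Set X) (hne : Y.Nonempty)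
    (hY : ∀ y ∈ Y, T y ∈ Y) :
    ∃ D : ℝ, 0 < D ∧ ∀ η : ℝ, 0 < η → ∃ m0 : ℕ, ∀ m : ℕ, m0 ≤ m →
      ∃ (p : X) (k : ℕ), 1 ≤ k ∧ (k : ℝ) ≤ Real.exp (η * m) ∧ (T : X → X)^[k] p = p ∧
        ∀ j : ℕ, Metric.infDist ((T : X → X)^[j] p) Y ≤ D * θ ^ m := by
  have hC := H.C0
  have hK := H.K0
  have hth := H.th0
  have hth1 := H.th1
  have he0 := H.eps0
  have he1 := H.eps1
  obtain ⟨ε, hε, hε1, hεK⟩ : ∃ ε : ℝ, 0 < ε ∧ ε ≤ 2 * ε₁ ∧ K * (C₀ * ε) ≤ ε₀ := by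
    refine ⟨min (2 * ε₁) (ε₀ / (K * C₀)), by positivity, min_le_left _ _, ?_⟩
    calc K * (C₀ * min (2 * ε₁) (ε₀ / (K * C₀))) ≤ K * (C₀ * (ε₀ / (K * C₀))) := by
          gcongr; exact min_le_right _ _
      _ = ε₀ := by field_simp
  obtain ⟨t, ht, code, hcode⟩ := bq_code (X := X) ε hε
  have : Finite t := ht
  refine ⟨12 * C₀ ^ 2 * ε, by positivity, fun η hη => ?_⟩
  obtain ⟨L0, hL0⟩ := bq_words_cycle (T : X → X) code Y hne hY (η / 4) (by positivity)
  have htend : Filter.Tendsto (fun m : ℕ => θ ^ m) Filter.atTop (nhds 0) :=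
    tendsto_pow_atTop_nhds_zero_of_lt_one hth.le hth1
  have hsmall : ∀ c : ℝ, 0 < c → ∃ m1 : ℕ, ∀ m, m1 ≤ m → θ ^ m ≤ c := by
    intro c hc
    obtain ⟨m1, h⟩ := Filter.eventually_atTop.1 (htend.eventually (gt_mem_nhds hc))
    exact ⟨m1, fun m hm => (h m hm).le⟩
  obtain ⟨m1, hm1⟩ := hsmall (1 / (2 * C₀)) (by positivity)
  obtain ⟨m2, hm2⟩ := hsmall (1 / 2) (by positivity)
  obtain ⟨m3, hm3⟩ := hsmall (ε₁ / (2 * C₀ * ε)) (by positivity)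
  obtain ⟨m4, hm4⟩ := hsmall (ε₀ / (24 * C₀ ^ 2 * ε)) (by positivity)
  obtain ⟨m5, hm5⟩ : ∃ m5 : ℕ, ∀ m : ℕ, m5 ≤ m →
      12 * Real.exp (η / 4) * m ≤ Real.exp (η / 2 * m) := by
    have h1 := (isLittleO_pow_exp_pos_mul_atTop 1 (half_pos hη)).comp_tendsto
      (tendsto_natCast_atTop_atTop (R := ℝ))
    have h2 := h1.def (show (0 : ℝ) < 1 / (12 * Real.exp (η / 4)) by positivity)
    obtain ⟨m5, h⟩ := Filter.eventually_atTop.1 h2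
    refine ⟨m5, fun m hm => ?_⟩
    have h3 := h m hm
    simp only [Function.comp, pow_one, Real.norm_eq_abs, Nat.abs_cast, Real.abs_exp] at h3
    rw [one_div, inv_mul_eq_div, le_div_iff₀ (by positivity)] at h3
    linarith
  refine ⟨L0 + m1 + m2 + m3 + m4 + m5 + 1, fun m hm => ?_⟩
  obtain ⟨c, hc1, hc2, y, hyY, hyper, hyc⟩ := hL0 (2 * m + 1) (by omega)
  set L := 2 * m + 1 with hL
  set δ := 2 * C₀ * ε * θ ^ m with hδ
  have hx : ∀ k, dist ((T : X → X)^[L] ((T : X → X)^[m] (y k))) ((T : X → X)^[m] (y (k + 1)))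
      ≤ δ := by
    intro k
    rw [← Function.iterate_add_apply, Nat.add_comm, Function.iterate_add_apply]
    apply bq_expansive H ε hε1 hεK m
    · intro j hj
      rw [← Function.iterate_add_apply, ← Function.iterate_add_apply _ j m (y (k + 1))]
      exact hcode _ _ (hyc k (j + m) (by omega))
    · intro j hj
      have e : ∀ z, (T.symm : X → X)^[j] ((T : X → X)^[m] z) = (T : X → X)^[m - j] z :=
        fun z => bq_iter_symm T.symm j m hj z
      rw [e, e]
      exact hcode _ _ (hyc k (m - j) (by omega))
  have hδ1 : δ ≤ ε₁ := by
    have := hm3 m (by omega)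
    rw [le_div_iff₀ (by positivity)] at this
    rw [hδ]; linarith
  have hδ2 : 12 * C₀ * δ ≤ ε₀ := by
    have := hm4 m (by omega)
    rw [le_div_iff₀ (by positivity)] at this
    rw [hδ]; nlinarith
  have hLC : C₀ * θ ^ L ≤ 1 / 2 := by
    have := hm1 L (by omega)
    rw [le_div_iff₀ (by positivity)] at this
    linarith
  obtain ⟨p, hp, hsh⟩ := bq_closing H L (by omega) hLC (hm2 L (by omega)) δ (by positivity)
    hδ1 hδ2 (fun k => (T : X → X)^[m] (y k)) hx c hc1 (fun k => by simp only [hyper])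
  refine ⟨p, L * c, Nat.mul_pos (by omega) hc1, ?_, hp, ?_⟩
  · have h5 := hm5 m (by omega)
    have hm1' : (1 : ℝ) ≤ m := by exact_mod_cast (by omega : 1 ≤ m)
    have e1 : Real.exp (η / 4 * (L : ℕ)) = Real.exp (η / 4) * Real.exp (η / 2 * m) := by
      rw [← Real.exp_add]; congr 1; rw [hL]; push_cast; ring
    have e2 : Real.exp (η * m) = Real.exp (η / 2 * m) * Real.exp (η / 2 * m) := by
      rw [← Real.exp_add]; congr 1; ring
    rw [e1] at hc2
    have hL3 : (L : ℝ) ≤ 3 * m := by rw [hL]; push_cast; linarith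
    push_cast
    calc (L : ℝ) * c ≤ (3 * m) * (4 * (Real.exp (η / 4) * Real.exp (η / 2 * m))) := by gcongr
      _ = (12 * Real.exp (η / 4) * m) * Real.exp (η / 2 * m) := by ring
      _ ≤ Real.exp (η / 2 * m) * Real.exp (η / 2 * m) := by gcongr
      _ = _ := e2.symm
  · intro j
    have h1 := hsh (j / L) (j % L) (Nat.mod_lt _ (by omega))
    rw [Nat.div_add_mod] at h1
    refine (Metric.infDist_le_dist_of_mem ?_).trans (h1.trans ?_)
    · exact bq_mapsTo_iter _ Y hY _ _ (bq_mapsTo_iter _ Y hY _ _ (hyY _))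
    · rw [hδ]; apply le_of_eq; ring

theorem bq_back {X : Type*} [MetricSpace X] (T : X ≃ₜ X) (p : X) (k : ℕ) (hk : 1 ≤ k)
    (hp : (T : X → X)^[k] p = p) (j : ℤ) : ∃ i : ℕ, zIter T j p = (T : X → X)^[i] p := by
  cases j with
  | ofNat n => exact ⟨n, rfl⟩
  | negSucc n =>
    refine ⟨k * (n + 1) - (n + 1), ?_⟩
    have h1 : (T : X → X)^[k * (n + 1)] p = p := by
      rw [Function.iterate_mul]
      exact Function.iterate_fixed hp _
    have h2 : (T.symm : X → X)^[n + 1] ((T : X → X)^[k * (n + 1)] p)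
        = (T : X → X)^[k * (n + 1) - (n + 1)] p :=
      bq_iter_symm T.symm (n + 1) (k * (n + 1)) (Nat.le_mul_of_pos_left _ hk) p
    rw [h1] at h2
    exact h2

/-- **Theorem 7.4** of Bochi–Garibaldi, "Extremal Norms for Fiber-Bunched Cocycles"
(Bressaud–Quas Closing Lemma): if `Y` is a nonempty compact invariant set of a hyperbolic
homeomorphism `T`, then for every `τ > 0` and every sufficiently large `n` there is a
periodic orbit of period at most `n` contained in the `n^{-τ}`-neighborhood of `Y`. -/
theorem bressaud_quas_closing_lemma {X : Type*} [MetricSpace X] [CompactSpace X]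
    (T : X ≃ₜ X) (ε₀ ε₁ : ℝ) (lu ls : X → ℝ) (br : X → X → X) (C₀ : ℝ)
    (hT : HypHomeo T ε₀ ε₁ lu ls br C₀)
    (Y : Set X) (hYne : Y.Nonempty) (hYcomp : IsCompact Y)
    (hYinv : (T : X → X) '' Y = Y) :
    ∀ τ : ℝ, 0 < τ → ∃ N : ℕ, ∀ n : ℕ, N ≤ n →
      ∃ (p : X) (k : ℕ), 1 ≤ k ∧ k ≤ n ∧ (T : X → X)^[k] p = p ∧
        ∀ j : ℤ, Metric.infDist (zIter T j p) Y ≤ (n : ℝ) ^ (-τ) := by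
  intro τ hτ
  have : Nonempty X := ⟨hYne.some⟩
  obtain ⟨θ, K, H⟩ := bq_unif T ε₀ ε₁ lu ls br C₀ hT
  have hY : ∀ y ∈ Y, T y ∈ Y := fun y hy => hYinv ▸ Set.mem_image_of_mem _ hy
  obtain ⟨D, hD, hcore⟩ := bq_core H Y hYne hY
  have hlam : 0 < -Real.log θ := by
    have := Real.log_neg H.th0 H.th1
    linarith
  set lam := -Real.log θ with hlamdef
  set A := 2 * τ / lam with hA
  have hA0 : 0 < A := by positivity
  obtain ⟨m0, hm0⟩ := hcore (1 / (2 * A)) (by positivity)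
  have hlog : Filter.Tendsto (fun n : ℕ => Real.log (n : ℝ)) Filter.atTop Filter.atTop :=
    Real.tendsto_log_atTop.comp tendsto_natCast_atTop_atTop
  have e1 := hlog.eventually_ge_atTop (m0 / A)
  have e2 := hlog.eventually_ge_atTop (1 / A)
  have e3 := hlog.eventually_ge_atTop (Real.log D / τ)
  obtain ⟨N, hN⟩ := Filter.eventually_atTop.1 (e1.and (e2.and e3))
  refine ⟨N + 1, fun n hn => ?_⟩
  obtain ⟨h1, h2, h3⟩ := hN n (by omega)
  have hn0 : (0 : ℝ) < n := by exact_mod_cast (by omega : 0 < n)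
  have hl0 : 0 ≤ Real.log n := le_trans (by positivity) h2
  rw [div_le_iff₀ hA0] at h1 h2
  rw [div_le_iff₀ hτ] at h3
  set m := ⌈A * Real.log n⌉₊ with hm
  have hmge : A * Real.log n ≤ m := Nat.le_ceil _
  have hmlt : (m : ℝ) < A * Real.log n + 1 := Nat.ceil_lt_add_one (by positivity)
  have hmm0 : m0 ≤ m := by
    have : (m0 : ℝ) ≤ m := by linarith
    exact_mod_cast this
  obtain ⟨p, k, hk1, hk2, hp, hd⟩ := hm0 m hmm0
  refine ⟨p, k, hk1, ?_, hp, fun j => ?_⟩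
  · have h4 : 1 / (2 * A) * m ≤ Real.log n := by
      rw [one_div, inv_mul_eq_div, div_le_iff₀ (by positivity)]
      linarith
    have h5 : (k : ℝ) ≤ n := by
      refine hk2.trans ?_
      calc Real.exp (1 / (2 * A) * m) ≤ Real.exp (Real.log n) := Real.exp_le_exp.2 h4
        _ = n := Real.exp_log hn0
    exact_mod_cast h5
  · obtain ⟨i, hi⟩ := bq_back T p k hk1 hp j
    rw [hi]
    refine (hd i).trans ?_
    have h6 : θ ^ m = Real.exp (-(lam * m)) := by
      rw [hlamdef, ← Real.exp_log H.th0, ← Real.exp_nat_mul, Real.log_exp]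
      congr 1; ring
    rw [h6, Real.rpow_def_of_pos hn0, ← Real.exp_log hD, ← Real.exp_add]
    apply Real.exp_le_exp.2
    have h7 : lam * (A * Real.log n) ≤ lam * m := by gcongr
    have h8 : lam * A = 2 * τ := by rw [hA]; field_simp
    have h9 : lam * (A * Real.log n) = 2 * τ * Real.log n := by rw [← h8]; ring
    linarith
end

section
/- Let (X,d) be a nonempty compact metric space, T : X → X a homeomorphism, and F : X → GL(d,ℝ) continuous. Then there exists a Lyapunov maximizing measure μ whose support equals the Mather set M(F); in particular, M(F) is nonempty, compact, and T-invariant. (Proposition 6.1 of the paper.) -/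
/-- Euclidean operator norm of a `d × d` real matrix. -/
noncomputable def matNorm {d : ℕ} (A : Matrix (Fin d) (Fin d) ℝ) : ℝ :=
  ‖LinearMap.toContinuousLinearMap (Matrix.toEuclideanLin A)‖

/-- Cocycle products: `cocycle T F n x = F(T^{n-1}x) ⬝ ⋯ ⬝ F(Tx) ⬝ F(x)`. -/
def cocycle {X : Type*} (T : X → X) {d : ℕ} (F : X → Matrix (Fin d) (Fin d) ℝ) :
    ℕ → X → Matrix (Fin d) (Fin d) ℝ
  | 0, _ => 1
  | n + 1, x => cocycle T F n (T x) * F x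

/-- `μ` is a `T`-invariant Borel probability measure. -/
def IsInvProb {X : Type*} [MeasurableSpace X] (T : X → X)
    (μ : MeasureTheory.Measure X) : Prop :=
  MeasureTheory.IsProbabilityMeasure μ ∧ μ.map T = μ

/-- Top Lyapunov exponent `χ₁(F, μ)` of the cocycle `(T,F)` w.r.t. the measure `μ`. -/
noncomputable def lyapExp {X : Type*} [MeasurableSpace X] (T : X → X) {d : ℕ}
    (F : X → Matrix (Fin d) (Fin d) ℝ) (μ : MeasureTheory.Measure X) : ℝ :=
  ⨅ n : ℕ, (1 / (n + 1 : ℝ)) * ∫ x, Real.log (matNorm (cocycle T F (n + 1) x)) ∂μ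

/-- Maximal Lyapunov exponent `β(F)`. -/
noncomputable def maxLyap {X : Type*} [MeasurableSpace X] (T : X → X) {d : ℕ}
    (F : X → Matrix (Fin d) (Fin d) ℝ) : ℝ :=
  sSup {r : ℝ | ∃ μ : MeasureTheory.Measure X, IsInvProb T μ ∧ r = lyapExp T F μ}

/-- Topological support of a measure. -/
def measSupport {X : Type*} [TopologicalSpace X] [MeasurableSpace X]
    (μ : MeasureTheory.Measure X) : Set X :=
  {x | ∀ U : Set X, IsOpen U → x ∈ U → 0 < μ U}

/-- The Mather set `M(F)`: union of supports of all Lyapunov maximizing measures. -/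
def mather {X : Type*} [TopologicalSpace X] [MeasurableSpace X] (T : X → X) {d : ℕ}
    (F : X → Matrix (Fin d) (Fin d) ℝ) : Set X :=
  ⋃ μ ∈ {μ : MeasureTheory.Measure X | IsInvProb T μ ∧ lyapExp T F μ = maxLyap T F},
    measSupport μ

open MeasureTheory Filter Topology Set
open scoped BoundedContinuousFunction

section MatherAux

lemma matNorm_continuous {d : ℕ} : Continuous (matNorm : Matrix (Fin d) (Fin d) ℝ → ℝ) := by
  unfold matNorm
  refine continuous_norm.comp ?_
  exact LinearMap.continuous_of_finiteDimensional
    ((LinearMap.toContinuousLinearMap (𝕜 := ℝ)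
      (E := EuclideanSpace ℝ (Fin d)) (F' := EuclideanSpace ℝ (Fin d))).toLinearMap ∘ₗ
      (Matrix.toEuclideanLin (𝕜 := ℝ) (m := Fin d) (n := Fin d)).toLinearMap)

open scoped Matrix.Norms.L2Operator in
lemma matNorm_mul_le {d : ℕ} (A B : Matrix (Fin d) (Fin d) ℝ) :
    matNorm (A * B) ≤ matNorm A * matNorm B :=
  Matrix.l2_opNorm_mul A B

lemma matNorm_nonneg {d : ℕ} (A : Matrix (Fin d) (Fin d) ℝ) : 0 ≤ matNorm A := norm_nonneg _

lemma matNorm_pos {d : ℕ} (hd : d ≠ 0) {A : Matrix (Fin d) (Fin d) ℝ} (hA : IsUnit A) :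
    0 < matNorm A := by
  have : NeZero d := ⟨hd⟩
  unfold matNorm
  rw [norm_pos_iff]
  intro h
  have : A = 0 := by simpa using h
  exact hA.ne_zero this

lemma matNorm_one {d : ℕ} (hd : d ≠ 0) : matNorm (1 : Matrix (Fin d) (Fin d) ℝ) = 1 := by
  have : NeZero d := ⟨hd⟩
  have : LinearMap.toContinuousLinearMap (Matrix.toEuclideanLin (1 : Matrix (Fin d) (Fin d) ℝ))
      = ContinuousLinearMap.id ℝ (EuclideanSpace ℝ (Fin d)) := by
    ext v i
    simp [Matrix.toEuclideanLin]
  unfold matNorm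
  rw [this]
  exact ContinuousLinearMap.norm_id

variable {X : Type*} [MetricSpace X] [CompactSpace X] [MeasurableSpace X] [BorelSpace X]
  {T : X ≃ₜ X} {d : ℕ} {F : X → Matrix (Fin d) (Fin d) ℝ}

lemma cocycle_continuous (hF : Continuous F) (n : ℕ) :
    Continuous (fun x => cocycle (T : X → X) F n x) := by
  induction n with
  | zero => exact continuous_const
  | succ n ih => exact (ih.comp T.continuous).matrix_mul hF

lemma cocycle_isUnit (hU : ∀ x, IsUnit (F x)) (n : ℕ) (x : X) :
    IsUnit (cocycle (T : X → X) F n x) := by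
  induction n generalizing x with
  | zero => exact isUnit_one
  | succ n ih => exact (ih _).mul (hU x)

lemma logc_continuous (hF : Continuous F) (hU : ∀ x, IsUnit (F x)) (n : ℕ) :
    Continuous (fun x => Real.log (matNorm (cocycle (T : X → X) F n x))) := by
  rcases Nat.eq_zero_or_pos d with rfl | hd
  · have : (fun x => Real.log (matNorm (cocycle (T : X → X) F n x)))
        = fun _ => Real.log (matNorm (0 : Matrix (Fin 0) (Fin 0) ℝ)) := by
      funext x
      rw [Subsingleton.elim (cocycle (T : X → X) F n x) 0]
    rw [this]
    exact continuous_const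
  · exact (matNorm_continuous.comp (cocycle_continuous hF n)).log
      (fun x => (matNorm_pos hd.ne' (cocycle_isUnit hU n x)).ne')

lemma exists_lower (hF : Continuous F) (hU : ∀ x, IsUnit (F x)) :
    ∃ C : ℝ, ∀ (n : ℕ) (x : X),
      (n : ℝ) * C ≤ Real.log (matNorm (cocycle (T : X → X) F n x)) := by
  rcases Nat.eq_zero_or_pos d with rfl | hd
  · refine ⟨0, fun n x => ?_⟩
    rw [Subsingleton.elim (cocycle (T : X → X) F n x) 0]
    simp [matNorm]
  have hdet : ∀ x, (F x).det ≠ 0 := fun x =>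
    ((Matrix.isUnit_iff_isUnit_det _).1 (hU x)).ne_zero
  have hinv : Continuous (fun x => (F x)⁻¹) := by
    simp only [Matrix.inv_def, Ring.inverse_eq_inv']
    exact (hF.matrix_det.inv₀ hdet).smul hF.matrix_adjugate
  have hc : Continuous (fun x => Real.log (matNorm (F x)⁻¹)) :=
    (matNorm_continuous.comp hinv).log
      (fun x => (matNorm_pos hd.ne' ((Matrix.isUnit_nonsing_inv_iff).2 (hU x))).ne')
  obtain ⟨K, hK⟩ := (isCompact_range hc).bddAbove
  refine ⟨-K, fun n => ?_⟩
  induction n with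
  | zero => intro x; simp [cocycle, matNorm_one hd.ne']
  | succ n ih =>
    intro x
    have h1 : cocycle (T : X → X) F n (T x) = cocycle (T : X → X) F (n+1) x * (F x)⁻¹ := by
      simp only [cocycle]
      rw [Matrix.mul_assoc, Matrix.mul_nonsing_inv _ ((Matrix.isUnit_iff_isUnit_det _).1 (hU x)),
        Matrix.mul_one]
    have h2 := matNorm_mul_le (cocycle (T : X → X) F (n+1) x) (F x)⁻¹
    rw [← h1] at h2
    have p1 := matNorm_pos hd.ne' (cocycle_isUnit (T := T) hU n (T x))
    have p2 := matNorm_pos hd.ne' (cocycle_isUnit (T := T) hU (n+1) x)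
    have p3 := matNorm_pos hd.ne' ((Matrix.isUnit_nonsing_inv_iff).2 (hU x))
    have h3 := Real.log_le_log p1 h2
    rw [Real.log_mul p2.ne' p3.ne'] at h3
    have h4 := ih (T x)
    have h5 : Real.log (matNorm (F x)⁻¹) ≤ K := hK (mem_range_self x)
    push_cast
    linarith

lemma cont_integrable {f : X → ℝ} (hf : Continuous f) (μ : Measure X) [IsFiniteMeasure μ] :
    Integrable f μ :=
  (BoundedContinuousFunction.mkOfCompact ⟨f, hf⟩).integrable μ

lemma lyap_bdd (hF : Continuous F) (hU : ∀ x, IsUnit (F x)) (μ : Measure X)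
    [IsProbabilityMeasure μ] :
    BddBelow (range fun n : ℕ => (1 / (n + 1 : ℝ)) *
      ∫ x, Real.log (matNorm (cocycle (T : X → X) F (n + 1) x)) ∂μ) := by
  obtain ⟨C, hC⟩ := exists_lower (T := T) hF hU
  refine ⟨C, ?_⟩
  rintro _ ⟨n, rfl⟩
  have h1 : ((n + 1 : ℕ) : ℝ) * C ≤ ∫ x, Real.log (matNorm (cocycle (T : X → X) F (n + 1) x)) ∂μ := by
    have := integral_mono (μ := μ) (integrable_const (((n + 1 : ℕ) : ℝ) * C))
      (cont_integrable (logc_continuous (T := T) hF hU (n+1)) μ) (fun x => hC (n+1) x)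
    simpa using this
  have hn : (0 : ℝ) < n + 1 := by positivity
  push_cast at h1
  dsimp only
  rw [one_div, ← div_eq_inv_mul, le_div_iff₀ hn]
  linarith

/-- Krylov–Bogoliubov. -/
lemma exists_inv [Nonempty X] (T : X ≃ₜ X) : ∃ μ : ProbabilityMeasure X,
    μ.map T.continuous.measurable.aemeasurable = μ := by
  obtain ⟨x⟩ := ‹Nonempty X›
  let m : ℕ → Measure X := fun n =>
    ((n + 1 : ℕ) : ENNReal)⁻¹ • ∑ k ∈ Finset.range (n + 1), Measure.dirac ((T : X → X)^[k] x)
  have hm : ∀ n, IsProbabilityMeasure (m n) := by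
    intro n
    constructor
    simp only [m, Measure.smul_apply, Measure.finsetSum_apply, measure_univ, Finset.sum_const,
      Finset.card_range, nsmul_eq_mul, mul_one, smul_eq_mul]
    exact ENNReal.inv_mul_cancel (by simp) (ENNReal.natCast_ne_top _)
  let P : ℕ → ProbabilityMeasure X := fun n => ⟨m n, hm n⟩
  have hInt : ∀ (n : ℕ) (g : X → ℝ), Continuous g → ∫ y, g y ∂(m n) =
      birkhoffAverage ℝ (T : X → X) g (n+1) x := by
    intro n g hg
    simp only [m]
    rw [integral_smul_measure, integral_finsetSum_measure (fun i _ => cont_integrable hg _)]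
    rw [ENNReal.toReal_inv, ENNReal.toReal_natCast]
    simp [birkhoffAverage, birkhoffSum]
  let u : Ultrafilter ℕ := Ultrafilter.of atTop
  have hu : (u : Filter ℕ) ≤ atTop := Ultrafilter.of_le _
  obtain ⟨ν, -, hν⟩ := (isCompact_univ (X := ProbabilityMeasure X)).ultrafilter_le_nhds
    (u.map P) (by simp)
  have hν' : Tendsto P u (𝓝 ν) := hν
  refine ⟨ν, ?_⟩
  apply Subtype.ext
  have : IsProbabilityMeasure ((ν : Measure X).map T) :=
    (ν : Measure X).isProbabilityMeasure_map T.continuous.measurable.aemeasurable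
  refine ext_of_forall_integral_eq_of_IsFiniteMeasure
    (μ := (ν : Measure X).map T) (ν := (ν : Measure X)) (fun g => ?_)
  rw [integral_map T.continuous.measurable.aemeasurable
    g.continuous.aestronglyMeasurable]
  have t1 := (ProbabilityMeasure.tendsto_iff_forall_integral_tendsto.1 hν') g
  have t2 := (ProbabilityMeasure.tendsto_iff_forall_integral_tendsto.1 hν')
    (g.compContinuous ⟨T, T.continuous⟩)
  have t3 := t2.sub t1
  have t4 : Tendsto (fun n => birkhoffAverage ℝ (T : X → X) g n (T x)
      - birkhoffAverage ℝ (T : X → X) g n x) atTop (𝓝 0) :=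
    tendsto_birkhoffAverage_apply_sub_birkhoffAverage' ℝ g.isBounded_range T x
  have t5 := ((tendsto_add_atTop_iff_nat 1).2 t4).mono_left hu
  have t6 := tendsto_nhds_unique t3 (t5.congr (fun n => ?_))
  · simpa [sub_eq_zero] using t6
  · change _ = ∫ y, (g (T y)) ∂(m n) - ∫ y, g y ∂(m n)
    rw [hInt n (fun y => g (T y)) (g.continuous.comp T.continuous), hInt n g g.continuous]
    congr 1
    simp only [birkhoffAverage, birkhoffSum]
    congr 1
    refine Finset.sum_congr rfl (fun k _ => ?_)
    rw [← Function.iterate_succ_apply, Function.iterate_succ_apply']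

lemma exists_max [Nonempty X] (hF : Continuous F) (hU : ∀ x, IsUnit (F x)) :
    ∃ μ : Measure X, IsInvProb (T : X → X) μ ∧
      ∀ ν : Measure X, IsInvProb (T : X → X) ν → lyapExp (T : X → X) F ν ≤ lyapExp (T : X → X) F μ := by
  let S : Set (ProbabilityMeasure X) := {μ | μ.map T.continuous.measurable.aemeasurable = μ}
  have hS : IsCompact S :=
    (isClosed_eq (ProbabilityMeasure.continuous_map T.continuous) continuous_id).isCompact
  have husc : UpperSemicontinuous
      (fun μ : ProbabilityMeasure X => lyapExp (T : X → X) F (μ : Measure X)) := by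
    unfold lyapExp
    apply upperSemicontinuous_ciInf
    · intro μ; exact lyap_bdd hF hU _
    · intro n
      apply Continuous.upperSemicontinuous
      apply Continuous.mul continuous_const
      exact ProbabilityMeasure.continuous_integral_boundedContinuousFunction
        (BoundedContinuousFunction.mkOfCompact ⟨_, logc_continuous (T := T) hF hU (n+1)⟩)
  obtain ⟨μ, hμS, hμ⟩ := (husc.upperSemicontinuousOn S).exists_isMaxOn (exists_inv T) hS
  refine ⟨μ, ⟨inferInstance, congrArg Subtype.val hμS⟩, fun ν hν => ?_⟩
  have := hν.1
  exact hμ (a := ⟨ν, hν.1⟩) (Subtype.ext hν.2)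

lemma measSupport_eq (μ : Measure X) : measSupport μ = μ.support := by
  ext x
  rw [Measure.mem_support_iff_forall]
  constructor
  · intro h U hU
    obtain ⟨V, hVU, hV, hx⟩ := mem_nhds_iff.1 hU
    exact (h V hV hx).trans_le (measure_mono hVU)
  · intro h U hU hx
    exact h U (hU.mem_nhds hx)

lemma sum_props (hF : Continuous F) (hU : ∀ x, IsUnit (F x)) (m : ℕ → Measure X)
    (hm : ∀ i, IsInvProb (T : X → X) (m i)) (b : ℝ)
    (hb : ∀ i, b ≤ lyapExp (T : X → X) F (m i)) :
    ∃ μ : Measure X, IsInvProb (T : X → X) μ ∧ b ≤ lyapExp (T : X → X) F μ ∧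
      ∀ i s, 0 < m i s → 0 < μ s := by
  let c : ℕ → ENNReal := fun i => 2⁻¹ ^ (i + 1)
  have hc0 : ∀ i, c i ≠ 0 := fun i => by simp [c]
  have hcsum : ∑' i, c i = 1 := by
    simp only [c]
    rw [ENNReal.tsum_geometric_add_one, ENNReal.one_sub_inv_two, inv_inv]
    exact ENNReal.inv_mul_cancel (by simp) (by simp)
  let μ : Measure X := Measure.sum (fun i => c i • m i)
  have : ∀ i, IsProbabilityMeasure (m i) := fun i => (hm i).1
  have hμ : IsProbabilityMeasure μ := by
    constructor
    simp [μ, Measure.sum_apply _ MeasurableSet.univ, hcsum]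
  refine ⟨μ, ⟨hμ, ?_⟩, ?_, ?_⟩
  · simp only [μ]
    rw [Measure.map_sum T.continuous.measurable.aemeasurable]
    congr 1
    funext i
    rw [Measure.map_smul, (hm i).2]
  · unfold lyapExp
    refine le_ciInf (fun n => ?_)
    have hInt := hasSum_integral_measure (μ := fun i => c i • m i)
      (cont_integrable (logc_continuous (T := T) hF hU (n+1)) μ)
    have hInt2 := hInt.mul_left (1 / (n + 1 : ℝ))
    have hcs : HasSum (fun i => (c i).toReal) 1 := by
      have := ENNReal.hasSum_toReal (f := c) (by rw [hcsum]; simp)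
      rw [← ENNReal.tsum_toReal_eq, hcsum] at this
      · simpa using this
      · intro i; simp [c]
    have hcs2 := hcs.mul_right b
    rw [one_mul] at hcs2
    refine hasSum_le (fun i => ?_) hcs2 hInt2
    rw [integral_smul_measure, smul_eq_mul, mul_left_comm]
    refine mul_le_mul_of_nonneg_left ?_ ENNReal.toReal_nonneg
    exact (hb i).trans (ciInf_le (lyap_bdd hF hU (m i)) n)
  · intro i s h
    refine lt_of_lt_of_le ?_ (Measure.le_sum (fun i => c i • m i) i s)
    simp only [Measure.smul_apply, smul_eq_mul]
    exact ENNReal.mul_pos (hc0 i) h.ne'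

end MatherAux

/-- **Proposition 6.1** of Bochi–Garibaldi, "Extremal Norms for Fiber-Bunched Cocycles":
the Mather set `M(F)` is the support of some Lyapunov maximizing measure; in particular
it is nonempty, compact and `T`-invariant. -/
theorem mather_is_support_of_maximizing_measure {X : Type*} [MetricSpace X]
    [CompactSpace X] [Nonempty X] [MeasurableSpace X] [BorelSpace X]
    (T : X ≃ₜ X) (d : ℕ) (F : X → Matrix (Fin d) (Fin d) ℝ)
    (hFcont : Continuous F) (hFunit : ∀ x, IsUnit (F x)) :
    ∃ μ : MeasureTheory.Measure X, IsInvProb (T : X → X) μ ∧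
      lyapExp (T : X → X) F μ = maxLyap (T : X → X) F ∧
      measSupport μ = mather (T : X → X) F ∧
      (mather (T : X → X) F).Nonempty ∧
      IsCompact (mather (T : X → X) F) ∧
      (T : X → X) '' mather (T : X → X) F = mather (T : X → X) F := by
  obtain ⟨μ₀, hμ₀, hmax⟩ := exists_max (T := T) hFcont hFunit
  have hβ : maxLyap (T : X → X) F = lyapExp (T : X → X) F μ₀ := by
    apply IsGreatest.csSup_eq
    refine ⟨⟨μ₀, hμ₀, rfl⟩, ?_⟩
    rintro _ ⟨ν, hν, rfl⟩
    exact hmax ν hν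
  have hle : ∀ ν : Measure X, IsInvProb (T : X → X) ν →
      lyapExp (T : X → X) F ν ≤ maxLyap (T : X → X) F := fun ν hν => hβ ▸ hmax ν hν
  obtain ⟨B, hBc, -, hB⟩ := TopologicalSpace.exists_countable_basis X
  have : Countable B := hBc
  obtain ⟨e, he⟩ := exists_injective_nat B
  -- for every basic set choose a maximizing measure charging it, if there is one
  have hch : ∀ i : ℕ, ∃ ν : Measure X, (IsInvProb (T : X → X) ν ∧
      lyapExp (T : X → X) F ν = maxLyap (T : X → X) F) ∧
      ∀ U : B, e U = i → ((U : Set X) ∩ mather (T : X → X) F).Nonempty → 0 < ν U := by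
    intro i
    by_cases h : ∃ U : B, e U = i ∧ ((U : Set X) ∩ mather (T : X → X) F).Nonempty
    · obtain ⟨U, hU, x, hxU, hx⟩ := h
      simp only [mather, mem_iUnion] at hx
      obtain ⟨ν, hν, hx⟩ := hx
      refine ⟨ν, hν, fun V hV _ => ?_⟩
      rw [he (hV.trans hU.symm)]
      exact hx U (hB.isOpen U.2) hxU
    · exact ⟨μ₀, ⟨hμ₀, hβ.symm⟩, fun U hU hne => absurd ⟨U, hU, hne⟩ h⟩
  choose m hm hmpos using hch
  obtain ⟨μ, hμ, hμb, hμpos⟩ := sum_props (T := T) hFcont hFunit m (fun i => (hm i).1)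
    (maxLyap (T : X → X) F) (fun i => (hm i).2.ge)
  have hμeq : lyapExp (T : X → X) F μ = maxLyap (T : X → X) F := le_antisymm (hle μ hμ) hμb
  have hsupp : measSupport μ = mather (T : X → X) F := by
    apply Subset.antisymm
    · exact subset_biUnion_of_mem (u := measSupport) (show μ ∈ {μ : Measure X | _} from ⟨hμ, hμeq⟩)
    · intro x hx U hU hxU
      obtain ⟨V, hV, hxV, hVU⟩ := hB.exists_subset_of_mem_open hxU hU
      exact (hμpos _ _ (hmpos _ ⟨V, hV⟩ rfl ⟨x, hxV, hx⟩)).trans_le (measure_mono hVU)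
  have := hμ.1
  refine ⟨μ, hμ, hμeq, hsupp, ?_, ?_, ?_⟩
  · rw [← hsupp, measSupport_eq]
    exact Measure.nonempty_support (IsProbabilityMeasure.ne_zero μ)
  · rw [← hsupp, measSupport_eq]
    exact Measure.isClosed_support.isCompact
  · rw [← hsupp]
    have hpre : ∀ U : Set X, IsOpen U → μ ((T : X → X) ⁻¹' U) = μ U := by
      intro U hU
      conv_rhs => rw [← hμ.2]
      rw [Measure.map_apply T.continuous.measurable hU.measurableSet]
    ext y
    constructor
    · rintro ⟨x, hx, rfl⟩ U hU hxU
      rw [← hpre U hU]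
      exact hx _ (hU.preimage T.continuous) hxU
    · intro hy
      refine ⟨T.symm y, fun U hU hyU => ?_, T.apply_symm_apply y⟩
      have h1 := hy (T.symm ⁻¹' U) (hU.preimage T.symm.continuous) hyU
      rw [← hpre _ (hU.preimage T.symm.continuous)] at h1
      have : (T : X → X) ⁻¹' (T.symm ⁻¹' U) = U := by ext z; simp
      rwa [this] at h1
end

section
/- Let d ≥ 1, N ≥ 1, and let A₀, …, A_{N−1} ∈ GL(d,ℝ) be an irreducible tuple of invertible matrices with joint spectral radius ρ. Then there exists a norm |||·||| on ℝ^d such that max_{0≤i≤N−1} |||A_i u||| = ρ·|||u||| for every u ∈ ℝ^d. (Barabanov's theorem; the one-step specialization of Theorem 5.4 of the paper on Barabanov norms for cocycles over shifts.) -/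
open Filter Topology

namespace Bar

abbrev E (d : ℕ) := EuclideanSpace ℝ (Fin d)

variable {d N : ℕ}

/-- `p T n v` is the maximum of the norms of the images of `v` under words of length `n`. -/
noncomputable def p (T : Fin N → E d →ₗ[ℝ] E d) : ℕ → Seminorm ℝ (E d)
  | 0 => normSeminorm ℝ (E d)
  | n + 1 => Finset.univ.sup (fun i => (p T n).comp (T i))

lemma p_zero (T : Fin N → E d →ₗ[ℝ] E d) (v : E d) : p T 0 v = ‖v‖ := rfl

lemma p_le_succ (T : Fin N → E d →ₗ[ℝ] E d) (n : ℕ) (i : Fin N) (v : E d) :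
    p T n (T i v) ≤ p T (n + 1) v :=
  Seminorm.le_finset_sup_apply (p := fun i => (p T n).comp (T i)) (Finset.mem_univ i)

lemma p_succ_le (T : Fin N → E d →ₗ[ℝ] E d) (n : ℕ) (v : E d) (M : ℝ) (hM : 0 ≤ M)
    (h : ∀ i, p T n (T i v) ≤ M) : p T (n + 1) v ≤ M :=
  Seminorm.finset_sup_apply_le (p := fun i => (p T n).comp (T i)) hM (fun i _ => h i)

lemma p_succ_ex (hN : 1 ≤ N) (T : Fin N → E d →ₗ[ℝ] E d) (n : ℕ) (v : E d) :
    ∃ i, p T (n + 1) v = p T n (T i v) := by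
  obtain ⟨i, -, h⟩ := Seminorm.exists_apply_eq_finset_sup (fun i => (p T n).comp (T i))
    (s := Finset.univ) ⟨⟨0, hN⟩, Finset.mem_univ _⟩ v
  exact ⟨i, h⟩

lemma p_orbit (hN : 1 ≤ N) (T : Fin N → E d →ₗ[ℝ] E d) (n : ℕ) : ∀ v : E d,
    ∃ u, ‖u‖ = p T n v ∧ ∀ m, p T m u ≤ p T (m + n) v := by
  induction n with
  | zero => intro v; exact ⟨v, rfl, fun m => le_rfl⟩
  | succ n ih =>
    intro v
    obtain ⟨i, hi⟩ := p_succ_ex hN T n v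
    obtain ⟨u, hu, h⟩ := ih (T i v)
    exact ⟨u, by rw [hu, hi], fun m => (h m).trans (p_le_succ T (m + n) i v)⟩

lemma p_submul (T : Fin N → E d →ₗ[ℝ] E d) (m : ℕ) (t : ℝ) (ht : 0 ≤ t)
    (h : ∀ v, p T m v ≤ t * ‖v‖) (n : ℕ) : ∀ v, p T (m + n) v ≤ t * p T n v := by
  induction n with
  | zero => exact h
  | succ n ih =>
    intro v
    refine p_succ_le T (m + n) v _ (mul_nonneg ht (apply_nonneg _ _)) fun i => ?_
    exact (ih (T i v)).trans (mul_le_mul_of_nonneg_left (p_le_succ T n i v) ht)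

lemma p_pow (T : Fin N → E d →ₗ[ℝ] E d) (m : ℕ) (t : ℝ) (ht : 0 ≤ t)
    (h : ∀ v, p T m v ≤ t * ‖v‖) (k : ℕ) : ∀ v, p T (m * k) v ≤ t ^ k * ‖v‖ := by
  induction k with
  | zero => intro v; simp [p_zero]
  | succ k ih =>
    intro v
    have := p_submul T m t ht h (m * k) v
    rw [show m * (k + 1) = m + m * k by ring, pow_succ']
    nlinarith [mul_le_mul_of_nonneg_left (ih v) ht]

lemma p_basis (T : Fin N → E d →ₗ[ℝ] E d) (n : ℕ) (v : E d) :
    p T n v ≤ (∑ i, p T n (EuclideanSpace.single i (1 : ℝ))) * ‖v‖ := by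
  have hv : v = ∑ i, v i • EuclideanSpace.single i (1 : ℝ) := by
    ext j
    simp [Pi.single_apply]
  have h1 : p T n (∑ i, v i • EuclideanSpace.single i (1 : ℝ)) ≤
      ∑ i, p T n (v i • EuclideanSpace.single i (1 : ℝ)) :=
    Finset.le_sum_of_subadditive _ (map_zero (p T n)).le (map_add_le_add (p T n)) _ _
  rw [← hv] at h1
  refine h1.trans ?_
  rw [Finset.sum_mul]
  refine Finset.sum_le_sum fun i _ => ?_
  rw [map_smul_eq_mul, mul_comm]
  exact mul_le_mul_of_nonneg_left (PiLp.norm_apply_le v i) (apply_nonneg _ _)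

lemma p_cont (T : Fin N → E d →ₗ[ℝ] E d) (n : ℕ) : Continuous (p T n) := by
  have := (p T n).convexOn.continuousOn isOpen_univ
  exact continuousOn_univ.mp this

section main
variable (hN : 1 ≤ N) (T : Fin N → E d →ₗ[ℝ] E d) (ρ : ℝ) (hρ : 0 < ρ)
  (hirr : ∀ V : Submodule ℝ (E d), (∀ i, ∀ v ∈ V, T i v ∈ V) → V = ⊥ ∨ V = ⊤)
  (hup : ∀ r, ρ < r → ∃ n0, ∀ n, n0 ≤ n → ∀ v, p T n v ≤ r ^ n * ‖v‖)
  (hlow : ∀ n, 1 ≤ n → ∀ t, 0 ≤ t → (∀ v, p T n v ≤ t * ‖v‖) → ρ ^ n ≤ t)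

/-- The subspace of vectors with bounded normalised orbit. -/
def bddSub : Submodule ℝ (E d) where
  carrier := {v | ∃ C, ∀ n, p T n v ≤ C * ρ ^ n}
  zero_mem' := ⟨0, fun n => by simp⟩
  add_mem' := by
    rintro a b ⟨C, hC⟩ ⟨D, hD⟩
    refine ⟨C + D, fun n => (map_add_le_add _ _ _).trans ?_⟩
    nlinarith [hC n, hD n]
  smul_mem' := by
    rintro c a ⟨C, hC⟩
    refine ⟨‖c‖ * C, fun n => ?_⟩
    rw [map_smul_eq_mul, mul_assoc]
    exact mul_le_mul_of_nonneg_left (hC n) (norm_nonneg c)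

include hN hρ hup in
lemma not_bot (hd : 1 ≤ d) : bddSub T ρ ≠ ⊥ := by
  intro hbot
  have hS : IsCompact (Metric.sphere (0 : E d) 1) := isCompact_sphere _ _
  have key : ∀ v ∈ Metric.sphere (0 : E d) 1, ∃ n, 2 * ρ ^ n < p T n v := by
    intro v hv
    by_contra! hcon
    have : v ∈ bddSub T ρ := ⟨2, hcon⟩
    rw [hbot, Submodule.mem_bot] at this
    simp [this] at hv
  obtain ⟨F, hF⟩ := hS.elim_finite_subcover (fun n : ℕ => {v | 2 * ρ ^ n < p T n v})
    (fun n => isOpen_lt continuous_const (p_cont T n))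
    (fun v hv => by obtain ⟨n, hn⟩ := key v hv; exact Set.mem_iUnion.mpr ⟨n, hn⟩)
  set L := F.sup id + 1 with hL
  have hstep : ∀ v : E d, v ≠ 0 → ∃ n, 1 ≤ n ∧ n ≤ L ∧ 2 * ρ ^ n * ‖v‖ ≤ p T n v := by
    intro v hv
    have hv' : 0 < ‖v‖ := norm_pos_iff.mpr hv
    have hm : (‖v‖⁻¹ • v) ∈ Metric.sphere (0 : E d) 1 := by
      simp [norm_smul, hv'.ne']
    have := hF hm
    simp only [Set.mem_iUnion, Set.mem_ofPred_eq] at this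
    obtain ⟨n, hnF, hn⟩ := this
    rw [map_smul_eq_mul, norm_inv, norm_norm, inv_mul_eq_div, lt_div_iff₀ hv'] at hn
    refine ⟨n, ?_, ?_, hn.le⟩
    · rcases Nat.eq_zero_or_pos n with rfl | h
      · rw [p_zero] at hn; simp at hn; linarith
      · exact h
    · have : id n ≤ F.sup id := Finset.le_sup hnF
      simp at this; omega
  set s : ℝ := 2 ^ ((L : ℝ)⁻¹) with hs
  have hL0 : L ≠ 0 := by omega
  have hLr : (0 : ℝ) < L := by exact_mod_cast Nat.pos_of_ne_zero hL0
  have hs1 : 1 < s := Real.one_lt_rpow (by norm_num) (by positivity)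
  have hsL : s ^ L = 2 := Real.rpow_inv_natCast_pow (by norm_num) hL0
  have grow : ∀ k : ℕ, ∀ v : E d, v ≠ 0 → ∃ n, k ≤ n ∧ (ρ * s) ^ n * ‖v‖ ≤ p T n v := by
    intro k
    induction k with
    | zero => intro v _; exact ⟨0, le_rfl, by simp [p_zero]⟩
    | succ k ih =>
      intro v hv
      have hv' : 0 < ‖v‖ := norm_pos_iff.mpr hv
      obtain ⟨n, hn1, hnL, hn⟩ := hstep v hv
      obtain ⟨u, hu, hum⟩ := p_orbit hN T n v
      have hu0 : u ≠ 0 := by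
        rw [← norm_pos_iff, hu]
        exact lt_of_lt_of_le (by positivity) hn
      obtain ⟨m, hm, hmu⟩ := ih u hu0
      refine ⟨m + n, by omega, le_trans ?_ (hum m)⟩
      refine le_trans ?_ hmu
      rw [pow_add, mul_assoc, hu]
      refine mul_le_mul_of_nonneg_left (le_trans ?_ hn) (by positivity)
      refine mul_le_mul_of_nonneg_right ?_ hv'.le
      rw [mul_pow, mul_comm]
      refine mul_le_mul_of_nonneg_right ?_ (by positivity)
      rw [← hsL]
      exact pow_le_pow_right₀ hs1.le hnL
  have hlt : ρ < ρ * s := by nlinarith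
  obtain ⟨r, hr1, hr2⟩ := exists_between hlt
  obtain ⟨n0, hn0⟩ := hup r hr1
  have hv : (EuclideanSpace.single (⟨0, hd⟩ : Fin d) (1 : ℝ)) ≠ 0 := by
    rw [← norm_pos_iff]; simp
  obtain ⟨n, hn, hn'⟩ := grow (n0 + 1) _ hv
  have h2 := hn'.trans (hn0 n (by omega) _)
  have h3 := le_of_mul_le_mul_right h2 (norm_pos_iff.mpr hv)
  exact absurd h3 (not_le.mpr (pow_lt_pow_left₀ hr2 (hρ.trans hr1).le (by omega)))

include hN hρ hirr hup in
lemma bdd (hd : 1 ≤ d) (v : E d) : ∃ C, ∀ n, p T n v ≤ C * ρ ^ n := by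
  have h := hirr (bddSub T ρ) (by
    rintro i v ⟨C, hC⟩
    refine ⟨C * ρ, fun n => (p_le_succ T n i v).trans ((hC (n + 1)).trans (le_of_eq ?_))⟩
    ring)
  have h := h.resolve_left (not_bot hN T ρ hρ hup hd)
  have : v ∈ bddSub T ρ := by rw [h]; trivial
  exact this

/-- The Barabanov norm. -/
noncomputable def nrm (v : E d) : ℝ := limsup (fun n => p T n v / ρ ^ n) atTop

include hρ in
lemma L2 (v : E d) (x : ℝ) (h : ∀ᶠ n in atTop, p T n v / ρ ^ n ≤ x) : nrm T ρ v ≤ x := by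
  refine limsup_le_of_le ?_ h
  exact IsCoboundedUnder.of_frequently_ge (a := 0)
    (Frequently.of_forall fun n => div_nonneg (apply_nonneg _ _) (by positivity))

include hρ in
lemma L1 (v : E d) (hb : ∃ C, ∀ n, p T n v ≤ C * ρ ^ n) (x : ℝ) (hx : nrm T ρ v < x) :
    ∀ᶠ n in atTop, p T n v / ρ ^ n ≤ x := by
  obtain ⟨C, hC⟩ := hb
  refine (eventually_lt_of_limsup_lt hx ?_).mono fun n h => h.le
  exact isBoundedUnder_of ⟨C, fun n => by
    rw [div_le_iff₀ (by positivity)]; exact hC n⟩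

include hρ in
lemma nrm_nonneg (v : E d) (hb : ∃ C, ∀ n, p T n v ≤ C * ρ ^ n) : 0 ≤ nrm T ρ v := by
  refine le_of_forall_gt fun x hx => ?_
  obtain ⟨y, hy1, hy2⟩ := exists_between hx
  obtain ⟨n, hn⟩ := (L1 T ρ hρ v hb y hy1).exists
  exact lt_of_le_of_lt ((div_nonneg (apply_nonneg _ _) (by positivity)).trans hn) hy2

include hρ in
lemma nrm_add (hb : ∀ v : E d, ∃ C, ∀ n, p T n v ≤ C * ρ ^ n) (u v : E d) :
    nrm T ρ (u + v) ≤ nrm T ρ u + nrm T ρ v := by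
  refine le_of_forall_pos_le_add fun ε hε => ?_
  refine L2 T ρ hρ _ _ ?_
  filter_upwards [L1 T ρ hρ u (hb u) (nrm T ρ u + ε / 2) (by linarith),
    L1 T ρ hρ v (hb v) (nrm T ρ v + ε / 2) (by linarith)] with n h1 h2
  have : p T n (u + v) / ρ ^ n ≤ p T n u / ρ ^ n + p T n v / ρ ^ n := by
    rw [← add_div]
    exact div_le_div_of_nonneg_right (map_add_le_add _ _ _) (by positivity)
  linarith

include hρ in
lemma nrm_smul_le (hb : ∀ v : E d, ∃ C, ∀ n, p T n v ≤ C * ρ ^ n) (c : ℝ) (u : E d) :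
    nrm T ρ (c • u) ≤ |c| * nrm T ρ u := by
  refine le_of_forall_pos_le_add fun ε hε => ?_
  refine L2 T ρ hρ _ _ ?_
  have hc : 0 < |c| + 1 := by positivity
  filter_upwards [L1 T ρ hρ u (hb u) (nrm T ρ u + ε / (|c| + 1))
    (by have := div_pos hε hc; linarith)] with n h1
  rw [map_smul_eq_mul, mul_div_assoc, Real.norm_eq_abs]
  have h2 := mul_le_mul_of_nonneg_left h1 (abs_nonneg c)
  have h3 : |c| * (ε / (|c| + 1)) ≤ ε := by
    rw [← mul_div_assoc, div_le_iff₀ hc]; nlinarith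
  linarith

include hρ in
lemma nrm_smul (hb : ∀ v : E d, ∃ C, ∀ n, p T n v ≤ C * ρ ^ n) (c : ℝ) (u : E d) :
    nrm T ρ (c • u) = |c| * nrm T ρ u := by
  refine le_antisymm (nrm_smul_le T ρ hρ hb c u) ?_
  rcases eq_or_ne c 0 with rfl | hc
  · rw [abs_zero, zero_mul]; exact nrm_nonneg T ρ hρ _ (hb _)
  · have := nrm_smul_le T ρ hρ hb c⁻¹ (c • u)
    rw [smul_smul, inv_mul_cancel₀ hc, one_smul, abs_inv] at this
    have hc' := abs_pos.mpr hc
    rwa [inv_mul_eq_div, le_div_iff₀ hc', mul_comm] at this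

include hρ in
lemma nrm_T_le (hb : ∀ v : E d, ∃ C, ∀ n, p T n v ≤ C * ρ ^ n) (i : Fin N) (v : E d) :
    nrm T ρ (T i v) ≤ ρ * nrm T ρ v := by
  refine le_of_forall_pos_le_add fun ε hε => ?_
  refine L2 T ρ hρ _ _ ?_
  have h := L1 T ρ hρ v (hb v) (nrm T ρ v + ε / ρ) (by have := div_pos hε hρ; linarith)
  filter_upwards [(tendsto_add_atTop_nat 1).eventually h] with n h1
  have h2 : p T n (T i v) / ρ ^ n ≤ ρ * (p T (n + 1) v / ρ ^ (n + 1)) := by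
    rw [pow_succ', ← mul_div_assoc, mul_div_mul_left _ _ hρ.ne']
    exact div_le_div_of_nonneg_right (p_le_succ T n i v) (by positivity)
  have h3 := mul_le_mul_of_nonneg_left h1 hρ.le
  rw [mul_add, mul_div_cancel₀ _ hρ.ne'] at h3
  linarith

include hρ in
lemma le_nrm_T (hb : ∀ v : E d, ∃ C, ∀ n, p T n v ≤ C * ρ ^ n) (v : E d) (M : ℝ) (hM : 0 ≤ M)
    (h : ∀ i, nrm T ρ (T i v) ≤ M) : ρ * nrm T ρ v ≤ M := by
  refine le_of_forall_pos_le_add fun ε hε => ?_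
  rw [mul_comm, ← le_div_iff₀ hρ]
  refine L2 T ρ hρ _ _ ?_
  have h1 : ∀ᶠ n in atTop, ∀ i, p T n (T i v) / ρ ^ n ≤ M + ε :=
    eventually_all.mpr fun i => L1 T ρ hρ _ (hb _) _ (by linarith [h i])
  obtain ⟨n0, hn0⟩ := eventually_atTop.mp h1
  filter_upwards [eventually_ge_atTop (n0 + 1)] with n hn
  obtain ⟨m, rfl⟩ : ∃ m, n = m + 1 := ⟨n - 1, by omega⟩
  rw [div_le_div_iff₀ (by positivity) hρ, pow_succ, ← mul_assoc]
  refine mul_le_mul_of_nonneg_right ?_ hρ.le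
  refine p_succ_le T m v _ (by positivity) fun i => ?_
  exact (div_le_iff₀ (by positivity)).mp (hn0 m (by omega) i)

include hρ hirr hlow in
lemma nrm_pos (hb : ∀ v : E d, ∃ C, ∀ n, p T n v ≤ C * ρ ^ n) (v : E d) (hv : v ≠ 0) :
    0 < nrm T ρ v := by
  let W : Submodule ℝ (E d) :=
    { carrier := {v | nrm T ρ v ≤ 0}
      zero_mem' := by
        have := nrm_smul T ρ hρ hb 0 0
        simp at this
        exact this.le
      add_mem' := by
        intro a b ha hb'
        have := nrm_add T ρ hρ hb a b
        simp only [Set.mem_ofPred_eq] at *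
        linarith
      smul_mem' := by
        intro c a ha
        have := nrm_smul T ρ hρ hb c a
        simp only [Set.mem_ofPred_eq] at *
        rw [this]
        exact mul_nonpos_of_nonneg_of_nonpos (abs_nonneg c) ha }
  have hW : ∀ i, ∀ v ∈ W, T i v ∈ W := fun i v hv =>
    (nrm_T_le T ρ hρ hb i v).trans (mul_nonpos_of_nonneg_of_nonpos hρ.le hv)
  by_contra! hcon
  rcases hirr W hW with h | h
  · have : v ∈ W := hcon
    rw [h, Submodule.mem_bot] at this
    exact hv this
  · have h0 : ∀ v, nrm T ρ v ≤ 0 := fun v => by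
      have : v ∈ W := by rw [h]; trivial
      exact this
    have hε : (0 : ℝ) < 1 / (2 * (d + 1)) := by positivity
    have h1 : ∀ᶠ n in atTop, ∀ i : Fin d,
        p T n (EuclideanSpace.single i (1 : ℝ)) / ρ ^ n ≤ 1 / (2 * (d + 1)) :=
      eventually_all.mpr fun i => L1 T ρ hρ _ (hb _) _ (lt_of_le_of_lt (h0 _) hε)
    obtain ⟨n, hn, hn1⟩ := (h1.and (eventually_ge_atTop 1)).exists
    have hpn : (0 : ℝ) < ρ ^ n := by positivity
    have h2 := hlow n hn1 (ρ ^ n / 2) (by positivity) (fun v => by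
      refine (p_basis T n v).trans (mul_le_mul_of_nonneg_right ?_ (norm_nonneg v))
      have : ∑ i, p T n (EuclideanSpace.single i (1 : ℝ)) ≤
          ∑ i : Fin d, 1 / (2 * ((d : ℝ) + 1)) * ρ ^ n :=
        Finset.sum_le_sum fun i _ => (div_le_iff₀ hpn).mp (hn i)
      refine this.trans ?_
      rw [Finset.sum_const, Finset.card_univ, Fintype.card_fin, nsmul_eq_mul, ← mul_assoc,
        div_eq_mul_inv (ρ ^ n), mul_comm (ρ ^ n)]
      refine mul_le_mul_of_nonneg_right ?_ hpn.le
      rw [mul_one_div, div_le_iff₀ (by positivity)]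
      linarith)
    linarith

end main

section link
variable (A : Fin N → Matrix (Fin d) (Fin d) ℝ)

/-- The linear maps of the tuple. -/
noncomputable def TT (i : Fin N) : E d →ₗ[ℝ] E d := Matrix.toEuclideanLin (A i)

lemma toEuc_mul (M M' : Matrix (Fin d) (Fin d) ℝ) (v : E d) :
    Matrix.toEuclideanLin (M * M') v = Matrix.toEuclideanLin M (Matrix.toEuclideanLin M' v) := by
  simp [Matrix.toLpLin_apply, Matrix.mulVec_mulVec]

lemma toEuc_one (v : E d) : Matrix.toEuclideanLin (1 : Matrix (Fin d) (Fin d) ℝ) v = v := by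
  simp [Matrix.toLpLin_apply]

lemma ofFn_prod (n : ℕ) (w : Fin (n + 1) → Fin N) :
    (List.ofFn fun i => A (w i)).prod =
      (List.ofFn fun i : Fin n => A (w i.castSucc)).prod * A (w (Fin.last n)) := by
  rw [List.ofFn_succ', List.concat_eq_append, List.prod_append]
  simp

lemma word_le (n : ℕ) : ∀ (w : Fin n → Fin N) (v : E d),
    ‖Matrix.toEuclideanLin ((List.ofFn fun i => A (w i)).prod) v‖ ≤ p (TT A) n v := by
  induction n with
  | zero => intro w v; simp [p_zero]
  | succ n ih =>
    intro w v
    rw [ofFn_prod, toEuc_mul]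
    exact (ih _ _).trans (p_le_succ (TT A) n (w (Fin.last n)) v)

lemma word_ex (hN : 1 ≤ N) (n : ℕ) : ∀ v : E d, ∃ w : Fin n → Fin N,
    p (TT A) n v = ‖Matrix.toEuclideanLin ((List.ofFn fun i => A (w i)).prod) v‖ := by
  induction n with
  | zero => intro v; exact ⟨Fin.elim0, by simp [p_zero]⟩
  | succ n ih =>
    intro v
    obtain ⟨i, hi⟩ := p_succ_ex hN (TT A) n v
    obtain ⟨w, hw⟩ := ih (TT A i v)
    refine ⟨Fin.snoc (α := fun _ => Fin N) w i, ?_⟩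
    rw [ofFn_prod, toEuc_mul, hi, hw]
    simp [TT]

/-- Maximal norm of products of length `n`. -/
noncomputable def S (n : ℕ) : ℝ := sSup {r : ℝ | ∃ w : Fin n → Fin N,
          r = matNorm ((List.ofFn fun i => A (w i)).prod)}

lemma S_nonneg (n : ℕ) : 0 ≤ S A n := by
  refine Real.sSup_nonneg ?_
  rintro r ⟨w, rfl⟩
  exact norm_nonneg _

lemma le_matNorm (M : Matrix (Fin d) (Fin d) ℝ) (v : E d) :
    ‖Matrix.toEuclideanLin M v‖ ≤ matNorm M * ‖v‖ :=
  ContinuousLinearMap.le_opNorm (LinearMap.toContinuousLinearMap (Matrix.toEuclideanLin M)) v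

lemma p_le_S (hN : 1 ≤ N) (n : ℕ) (v : E d) : p (TT A) n v ≤ S A n * ‖v‖ := by
  obtain ⟨w, hw⟩ := word_ex A hN n v
  rw [hw]
  have h1 : ‖Matrix.toEuclideanLin ((List.ofFn fun i => A (w i)).prod) v‖ ≤
      matNorm ((List.ofFn fun i => A (w i)).prod) * ‖v‖ :=
    le_matNorm _ v
  refine h1.trans (mul_le_mul_of_nonneg_right ?_ (norm_nonneg v))
  refine le_csSup ?_ ⟨w, rfl⟩
  refine Set.Finite.bddAbove ?_
  refine (Set.finite_range
    fun w : Fin n → Fin N => matNorm ((List.ofFn fun i => A (w i)).prod)).subset ?_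
  rintro r ⟨w, rfl⟩
  exact ⟨w, rfl⟩

lemma S_le (hN : 1 ≤ N) (n : ℕ) (t : ℝ) (ht : 0 ≤ t) (h : ∀ v, p (TT A) n v ≤ t * ‖v‖) :
    S A n ≤ t := by
  refine csSup_le ⟨_, fun _ => ⟨0, hN⟩, rfl⟩ ?_
  rintro r ⟨w, rfl⟩
  exact ContinuousLinearMap.opNorm_le_bound _ ht fun v => (word_le A n w v).trans (h v)

variable (ρ : ℝ) (hρ : Tendsto (fun n : ℕ => S A n ^ ((1 : ℝ) / n)) atTop (nhds ρ))

lemma TT_inj (hA : ∀ i, IsUnit (A i)) (i : Fin N) : Function.Injective (TT A i) := by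
  have h : ∀ v, Matrix.toEuclideanLin (A i)⁻¹ (TT A i v) = v := fun v => by
    rw [TT, ← toEuc_mul, Matrix.nonsing_inv_mul _ ((Matrix.isUnit_iff_isUnit_det _).mp (hA i)),
      toEuc_one]
  exact Function.LeftInverse.injective h

include hρ in
lemma rho_pos (hd : 1 ≤ d) (hN : 1 ≤ N) (hA : ∀ i, IsUnit (A i)) : 0 < ρ := by
  obtain ⟨K, hK, hanti⟩ := LinearMap.exists_antilipschitzWith (TT A ⟨0, hN⟩)
    (LinearMap.ker_eq_bot.mpr (TT_inj A hA _))
  have hK' : (0 : ℝ) < K := by exact_mod_cast hK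
  have hstep : ∀ v : E d, (K : ℝ)⁻¹ * ‖v‖ ≤ ‖TT A ⟨0, hN⟩ v‖ := fun v => by
    rw [inv_mul_eq_div, div_le_iff₀ hK', mul_comm]
    simpa [dist_eq_norm] using hanti.le_mul_dist v 0
  have hp : ∀ n, ∀ v : E d, ((K : ℝ)⁻¹) ^ n * ‖v‖ ≤ p (TT A) n v := by
    intro n
    induction n with
    | zero => intro v; simp [p_zero]
    | succ n ih =>
      intro v
      refine le_trans ?_ ((ih _).trans (p_le_succ (TT A) n ⟨0, hN⟩ v))
      rw [pow_succ, mul_assoc]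
      exact mul_le_mul_of_nonneg_left (hstep v) (by positivity)
  have hv : ‖(EuclideanSpace.single (⟨0, hd⟩ : Fin d) (1 : ℝ))‖ = 1 := by simp
  refine lt_of_lt_of_le (inv_pos.mpr hK') (ge_of_tendsto hρ ?_)
  filter_upwards [eventually_ge_atTop 1] with n hn
  have h1 := (hp n _).trans (p_le_S A hN n (EuclideanSpace.single (⟨0, hd⟩ : Fin d) (1 : ℝ)))
  rw [hv, mul_one, mul_one] at h1
  have h2 := Real.rpow_le_rpow (by positivity) h1 (z := (1 : ℝ) / n) (by positivity)
  rw [one_div, Real.pow_rpow_inv_natCast (by positivity) (by omega)] at h2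
  rwa [one_div]

include hρ in
lemma up (hN : 1 ≤ N) (r : ℝ) (hr : ρ < r) :
    ∃ n0, ∀ n, n0 ≤ n → ∀ v, p (TT A) n v ≤ r ^ n * ‖v‖ := by
  have h := (hρ.eventually_lt_const hr).and (eventually_ge_atTop 1)
  obtain ⟨n0, hn0⟩ := eventually_atTop.mp h
  refine ⟨n0, fun n hn v => (p_le_S A hN n v).trans
    (mul_le_mul_of_nonneg_right ?_ (norm_nonneg v))⟩
  obtain ⟨h1, h2⟩ := hn0 n hn
  have h3 := pow_le_pow_left₀ (Real.rpow_nonneg (S_nonneg A n) _) h1.le n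
  rwa [one_div, Real.rpow_inv_natCast_pow (S_nonneg A n) (by omega)] at h3

include hρ in
lemma low (hN : 1 ≤ N) (h0 : 0 ≤ ρ) (n : ℕ) (hn : 1 ≤ n) (t : ℝ) (ht : 0 ≤ t)
    (h : ∀ v, p (TT A) n v ≤ t * ‖v‖) : ρ ^ n ≤ t := by
  have hsub : Tendsto (fun k : ℕ => n * k) atTop atTop :=
    tendsto_id.const_mul_atTop' (by omega)
  have h1 : ρ ≤ t ^ ((n : ℝ)⁻¹) := by
    refine le_of_tendsto (hρ.comp hsub) ?_
    filter_upwards [eventually_ge_atTop 1] with k hk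
    have h2 := S_le A hN (n * k) (t ^ k) (by positivity) (p_pow (TT A) n t ht h k)
    have h3 := Real.rpow_le_rpow (S_nonneg A _) h2 (z := (1 : ℝ) / (n * k : ℕ)) (by positivity)
    refine h3.trans (le_of_eq ?_)
    have hk' : (k : ℝ) ≠ 0 := by exact_mod_cast (by omega : k ≠ 0)
    have hn' : (n : ℝ) ≠ 0 := by exact_mod_cast (by omega : n ≠ 0)
    rw [← Real.rpow_natCast, ← Real.rpow_mul ht]
    congr 1
    push_cast
    field_simp
  have h2 := pow_le_pow_left₀ h0 h1 n
  rwa [Real.rpow_inv_natCast_pow ht (by omega)] at h2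

lemma irr (hA : ∀ i, IsUnit (A i))
    (hirr : ¬ ∃ V : Submodule ℝ (EuclideanSpace ℝ (Fin d)),
      0 < Module.finrank ℝ V ∧ Module.finrank ℝ V < d ∧
      ∀ i, V.map (Matrix.toEuclideanLin (A i)) = V)
    (V : Submodule ℝ (E d)) (hV : ∀ i, ∀ v ∈ V, TT A i v ∈ V) : V = ⊥ ∨ V = ⊤ := by
  by_contra! hcon
  refine hirr ⟨V, ?_, ?_, fun i => ?_⟩
  · exact Nat.pos_of_ne_zero fun h => hcon.1 (Submodule.finrank_eq_zero.mp h)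
  · have := Submodule.finrank_lt hcon.2
    simpa using this
  · refine Submodule.eq_of_le_of_finrank_eq (Submodule.map_le_iff_le_comap.mpr (hV i)) ?_
    exact (Submodule.equivMapOfInjective (TT A i) (TT_inj A hA i) V).finrank_eq.symm
end link

end Bar

/-- **Barabanov's theorem** (the one-step specialization of Theorem 5.4 of
Bochi–Garibaldi, "Extremal Norms for Fiber-Bunched Cocycles"): an irreducible tuple
`A₀, …, A_{N−1}` of invertible matrices with joint spectral radius `ρ` admits a
Barabanov norm: `max_i |||Aᵢ u||| = ρ·|||u|||` for all `u`. -/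
theorem barabanov (d N : ℕ) (hd : 1 ≤ d) (hN : 1 ≤ N)
    (A : Fin N → Matrix (Fin d) (Fin d) ℝ) (hA : ∀ i, IsUnit (A i))
    (hirr : ¬ ∃ V : Submodule ℝ (EuclideanSpace ℝ (Fin d)),
      0 < Module.finrank ℝ V ∧ Module.finrank ℝ V < d ∧
      ∀ i, V.map (Matrix.toEuclideanLin (A i)) = V)
    (ρ : ℝ)
    (hρ : Filter.Tendsto
      (fun n : ℕ => (sSup {r : ℝ | ∃ w : Fin n → Fin N,
          r = matNorm ((List.ofFn fun i => A (w i)).prod)}) ^ ((1 : ℝ) / n))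
      Filter.atTop (nhds ρ)) :
    ∃ Nrm : (Fin d → ℝ) → ℝ,
      (∀ u v, Nrm (u + v) ≤ Nrm u + Nrm v) ∧
      (∀ (c : ℝ) (u : Fin d → ℝ), Nrm (c • u) = |c| * Nrm u) ∧
      (∀ u, u ≠ 0 → 0 < Nrm u) ∧
      ∀ u, (⨆ i : Fin N, Nrm ((A i).mulVec u)) = ρ * Nrm u := by
  have hρ' : Filter.Tendsto (fun n : ℕ => Bar.S A n ^ ((1 : ℝ) / n)) Filter.atTop (nhds ρ) := hρ
  have h0 : 0 < ρ := Bar.rho_pos A ρ hρ' hd hN hA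
  have hirr' := Bar.irr A hA hirr
  have hb := Bar.bdd hN (Bar.TT A) ρ h0 hirr' (Bar.up A ρ hρ' hN) hd
  refine ⟨fun u => Bar.nrm (Bar.TT A) ρ (WithLp.toLp 2 u), ?_, ?_, ?_, ?_⟩
  · intro u v
    exact Bar.nrm_add (Bar.TT A) ρ h0 hb _ _
  · intro c u
    exact Bar.nrm_smul (Bar.TT A) ρ h0 hb c _
  · intro u hu
    refine Bar.nrm_pos (Bar.TT A) ρ h0 hirr' (Bar.low A ρ hρ' hN h0.le) hb _ ?_
    simpa using hu
  · intro u
    have hT : ∀ i, WithLp.toLp 2 ((A i).mulVec u) = Bar.TT A i (WithLp.toLp 2 u) := by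
      intro i
      simp [Bar.TT, Matrix.toLpLin_apply]
    simp only [hT]
    have : Nonempty (Fin N) := ⟨⟨0, hN⟩⟩
    have hbd : BddAbove (Set.range fun i => Bar.nrm (Bar.TT A) ρ (Bar.TT A i (WithLp.toLp 2 u))) :=
      (Set.finite_range _).bddAbove
    refine le_antisymm (ciSup_le fun i => Bar.nrm_T_le (Bar.TT A) ρ h0 hb i _) ?_
    refine Bar.le_nrm_T (Bar.TT A) ρ h0 hb _ _ ?_ fun i => le_ciSup hbd i
    exact (Bar.nrm_nonneg (Bar.TT A) ρ h0 _ (hb _)).trans (le_ciSup hbd ⟨0, hN⟩)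
end
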